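/- arXiv:math/0409349 — 2 statements merged into one kernel-verified Lean document; each statement's English description precedes it below -/
import Mathlib

section
/- Let S₀, S₁ and S₂ be three simply connected compact subsets of the plane ℝ² such that the intersection of any two of them is path connected and the intersection S₀ ∩ S₁ ∩ S₂ is nonempty. Then S₀ ∩ S₁ ∩ S₂ is path connected. -/
/-!
Two points of `S₀ ∩ S₁ ∩ S₂` are joined by paths `a`, `b`, `c` in `S₀ ∩ S₁`, `S₀ ∩ S₂`, `S₁ ∩ S₂`,
and simple connectedness provides homotopies `a ∼ b` in `S₀`, `a ∼ c` in `S₁` and `b ∼ c` in `S₂`.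
Filling in the holes of their images gives compact, uniformly locally connected sets `Kᵢ ⊆ Sᵢ`
that do not separate the plane; by Eilenberg's criterion the latter means that `w ↦ w - z` has a
continuous logarithm on `Kᵢ` for every `z ∉ Kᵢ`.

The two points lie in the same component of `K₀ ∩ K₁ ∩ K₂`: a separation would give a zero-free
function `u` on `K₀ ∩ (K₁ ∪ K₂)` that winds once along `a` and not at all along `b`. But `u` is a
quotient of zero-free functions on `K₀` and on `K₁ ∪ K₂`, so the homotopies force equal windings.

That component `C` is path connected because it is uniformly locally connected: otherwise two pieces
of `C` separated near a point could be bridged by a short segment. The bridge closes up a bounded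
complementary component, and since the `Kᵢ` have no holes it stays near the segment. There `C`
consists of the two pieces only, and these with the segment still carry a logarithm, which is
impossible on the boundary of a bounded component.
-/

open Set Filter Topology unitInterval

section Logarithms

/-- `HasLog f Y`: the function `f` has a continuous logarithm on `Y`. -/
def HasLog {X : Type*} [TopologicalSpace X] (f : X → ℂ) (Y : Set X) : Prop :=
  ∃ g : X → ℂ, ContinuousOn g Y ∧ ∀ w ∈ Y, Complex.exp (g w) = f w

variable {X X' : Type*} [TopologicalSpace X] [TopologicalSpace X'] {f f' g g' : X → ℂ}
  {Y Y' Y₁ Y₂ Z₁ Z₂ Q : Set X}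

theorem HasLog.mono (h : HasLog f Y) (hY : Y' ⊆ Y) : HasLog f Y' := by
  obtain ⟨g, hg, hgf⟩ := h
  exact ⟨g, hg.mono hY, fun w hw => hgf w (hY hw)⟩

theorem HasLog.congr (h : HasLog f Y) (hf : EqOn f' f Y) : HasLog f' Y := by
  obtain ⟨g, hg, hgf⟩ := h
  exact ⟨g, hg, fun w hw => (hgf w hw).trans (hf hw).symm⟩

theorem HasLog.comp {φ : X' → X} {T : Set X'} (h : HasLog f Y) (hφ : ContinuousOn φ T)
    (hT : MapsTo φ T Y) : HasLog (f ∘ φ) T := by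
  obtain ⟨g, hg, hgf⟩ := h
  exact ⟨g ∘ φ, hg.comp hφ hT, fun w hw => hgf _ (hT hw)⟩

theorem HasLog.mul (h : HasLog f Y) (h' : HasLog f' Y) : HasLog (fun w => f w * f' w) Y := by
  obtain ⟨g, hg, hgf⟩ := h
  obtain ⟨g', hg', hgf'⟩ := h'
  exact ⟨fun w => g w + g' w, hg.add hg', fun w hw => by
    rw [Complex.exp_add, hgf w hw, hgf' w hw]⟩

theorem HasLog.div (h : HasLog f Y) (h' : HasLog f' Y) : HasLog (fun w => f w / f' w) Y := by
  obtain ⟨g, hg, hgf⟩ := h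
  obtain ⟨g', hg', hgf'⟩ := h'
  exact ⟨fun w => g w - g' w, hg.sub hg', fun w hw => by
    rw [Complex.exp_sub, hgf w hw, hgf' w hw]⟩

theorem HasLog.ne_zero (h : HasLog f Y) {w : X} (hw : w ∈ Y) : f w ≠ 0 := by
  obtain ⟨g, -, hgf⟩ := h
  exact hgf w hw ▸ Complex.exp_ne_zero _

theorem HasLog.continuousOn (h : HasLog f Y) : ContinuousOn f Y := by
  obtain ⟨g, hg, hgf⟩ := h
  exact hg.cexp.congr fun w hw => (hgf w hw).symm

theorem hasLog_const {c : ℂ} (hc : c ≠ 0) (Y : Set X) : HasLog (fun _ => c) Y :=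
  ⟨fun _ => Complex.log c, continuousOn_const, fun _ _ => Complex.exp_log hc⟩

theorem hasLog_of_mapsTo_slitPlane (hf : ContinuousOn f Y) (h : MapsTo f Y Complex.slitPlane) :
    HasLog f Y :=
  ⟨fun w => Complex.log (f w), hf.clog h,
    fun _ hw => Complex.exp_log (Complex.slitPlane_ne_zero (h hw))⟩

theorem HasLog.of_norm_sub_lt (hg : HasLog g Y) (hf : ContinuousOn f Y)
    (h : ∀ w ∈ Y, ‖f w - g w‖ < ‖g w‖) : HasLog f Y := by
  have hquot : HasLog (fun w => f w / g w) Y := by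
    refine hasLog_of_mapsTo_slitPlane (hf.div hg.continuousOn fun _ hw => hg.ne_zero hw)
      fun w hw => ?_
    have hlt : ‖f w / g w - 1‖ < 1 := by
      rw [div_sub_one (hg.ne_zero hw), norm_div, div_lt_one (norm_pos_iff.2 (hg.ne_zero hw))]
      exact h w hw
    simpa using Complex.mem_slitPlane_of_norm_lt_one hlt
  exact (hquot.mul hg).congr fun w hw => (div_mul_cancel₀ _ (hg.ne_zero hw)).symm

theorem log_sub_eq_of_isPreconnected (hY : IsPreconnected Y) (hg : ContinuousOn g Y)
    (hg' : ContinuousOn g' Y) (h : ∀ w ∈ Y, Complex.exp (g w) = Complex.exp (g' w)) {p q : X}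
    (hp : p ∈ Y) (hq : q ∈ Y) : g p - g' p = g q - g' q := by
  have hper : Complex.exp (g p - g' p) = 1 := by
    rw [Complex.exp_sub, h p hp, div_self (Complex.exp_ne_zero _)]
  have heq : EqOn g (fun w => g' w + (g p - g' p)) Y :=
    Complex.isCoveringMap_exp.isSeparatedMap.eqOn_of_comp_eqOn
      Complex.isCoveringMap_exp.isLocalHomeomorph.isLocallyInjective hY hg
      (hg'.add continuousOn_const)
      (fun w hw => Subtype.ext (by simp [Complex.exp_add, hper, h w hw])) hp (by ring)
  linear_combination -heq hq

theorem hasLog_univ [SimplyConnectedSpace X] [LocallyPathConnectedSpace X] (hf : Continuous f)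
    (hf₀ : ∀ w, f w ≠ 0) : HasLog f univ := by
  obtain ⟨x₀⟩ : Nonempty X := inferInstance
  obtain ⟨g, ⟨-, hg⟩, -⟩ := Complex.isCoveringMapOn_exp.existsUnique_continuousMap_lifts
    (⟨f, hf⟩ : C(X, ℂ)) (a₀ := x₀) (e₀ := Complex.log (f x₀)) (Complex.exp_log (hf₀ x₀))
    (fun w => by simpa using hf₀ w)
  exact ⟨g, g.continuous.continuousOn, fun w _ => congrFun hg w⟩

theorem HasLog.exists_continuousMap [NormalSpace X] (h : HasLog f Y) (hY : IsClosed Y) :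
    ∃ G : C(X, ℂ), ∀ w ∈ Y, Complex.exp (G w) = f w := by
  obtain ⟨g, hg, hgf⟩ := h
  obtain ⟨G, hG⟩ := ContinuousMap.exists_restrict_eq hY
    (⟨Y.domRestrict g, hg.domRestrict⟩ : C(Y, ℂ))
  exact ⟨G, fun w hw => by rw [← hgf w hw]; exact congrArg _ (DFunLike.congr_fun hG ⟨w, hw⟩)⟩

theorem exists_continuousOn_union {B : Type*} [TopologicalSpace B] {g₁ g₂ : X → B}
    (hY₁ : IsClosed Y₁) (hY₂ : IsClosed Y₂) (hg₁ : ContinuousOn g₁ Y₁) (hg₂ : ContinuousOn g₂ Y₂)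
    (h : EqOn g₁ g₂ (Y₁ ∩ Y₂)) :
    ∃ g : X → B, ContinuousOn g (Y₁ ∪ Y₂) ∧ EqOn g g₁ Y₁ ∧ EqOn g g₂ Y₂ := by
  classical
  have h₁ : EqOn (Y₁.piecewise g₁ g₂) g₁ Y₁ := piecewise_eqOn _ _ _
  have h₂ : EqOn (Y₁.piecewise g₁ g₂) g₂ Y₂ := fun w hw => by
    by_cases hw₁ : w ∈ Y₁
    · rw [h₁ hw₁, h ⟨hw₁, hw⟩]
    · exact piecewise_eq_of_notMem _ _ _ hw₁
  exact ⟨_, (hg₁.congr h₁).union_of_isClosed (hg₂.congr h₂) hY₁ hY₂, h₁, h₂⟩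

theorem HasLog.union (h₁ : HasLog f Z₁) (h₂ : HasLog f Z₂) (hY₁ : IsClosed Y₁) (hY₂ : IsClosed Y₂)
    (hYZ₁ : Y₁ ⊆ Z₁) (hYZ₂ : Y₂ ⊆ Z₂) (hQ : IsPreconnected Q) (hYQ : Y₁ ∩ Y₂ ⊆ Q)
    (hQZ : Q ⊆ Z₁ ∩ Z₂) : HasLog f (Y₁ ∪ Y₂) := by
  obtain ⟨g₁, hg₁, hgf₁⟩ := h₁
  obtain ⟨g₂, hg₂, hgf₂⟩ := h₂
  obtain ⟨d, hd₁, hd⟩ : ∃ d, Complex.exp d = 1 ∧ ∀ w ∈ Y₁ ∩ Y₂, g₁ w = g₂ w + d := by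
    rcases (Y₁ ∩ Y₂).eq_empty_or_nonempty with hempty | ⟨p, hp⟩
    · exact ⟨0, Complex.exp_zero, by simp [hempty]⟩
    · refine ⟨g₁ p - g₂ p, ?_, fun w hw => ?_⟩
      · rw [Complex.exp_sub, hgf₁ p (hYZ₁ hp.1), hgf₂ p (hYZ₂ hp.2)]
        exact div_self (HasLog.ne_zero ⟨g₁, hg₁, hgf₁⟩ (hYZ₁ hp.1))
      · have := log_sub_eq_of_isPreconnected hQ (hg₁.mono fun w hw => (hQZ hw).1)
          (hg₂.mono fun w hw => (hQZ hw).2)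
          (fun w hw => (hgf₁ w (hQZ hw).1).trans (hgf₂ w (hQZ hw).2).symm) (hYQ hw) (hYQ hp)
        linear_combination this
  obtain ⟨g, hg, hgg₁, hgg₂⟩ := exists_continuousOn_union hY₁ hY₂ (hg₁.mono hYZ₁)
    (g₂ := fun w => g₂ w + d) ((hg₂.mono hYZ₂).add continuousOn_const) hd
  refine ⟨g, hg, ?_⟩
  rintro w (hw | hw)
  · rw [hgg₁ hw, hgf₁ w (hYZ₁ hw)]
  · simp only [hgg₂ hw, Complex.exp_add, hd₁, mul_one, hgf₂ w (hYZ₂ hw)]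

end Logarithms

section FullSets

/-- `IsFull K`: the plane set `K` does not separate any point of its complement from infinity.
The condition is phrased through logarithms, by Borsuk's criterion: for compact `K` it is equivalent
to connectedness of the complement of `K`. -/
def IsFull (K : Set ℂ) : Prop :=
  ∀ z ∉ K, HasLog (fun w => w - z) K

variable {K V : Set ℂ} {z : ℂ}

theorem isFull_of_convex (hK : Convex ℝ K) (hcl : IsClosed K) : IsFull K := by
  intro z hz
  obtain ⟨f, u, hfz, hfK⟩ := RCLike.geometric_hahn_banach_point_closed (𝕜 := ℂ) hK hcl hz
  have hf (w : ℂ) : f w = w * f 1 := by simpa using f.map_smul w 1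
  have hre (w) (hw : w ∈ K) : 0 < ((w - z) * f 1).re := by
    have := hfK w hw
    rw [hf, RCLike.re_eq_complex_re] at this hfz
    rw [sub_mul, Complex.sub_re]
    linarith
  rcases K.eq_empty_or_nonempty with rfl | ⟨b, hb⟩
  · exact ⟨0, continuousOn_empty _, by simp⟩
  have hf₁ : f 1 ≠ 0 := fun h => by simpa [h] using hre b hb
  have hmul : HasLog (fun w => (w - z) * f 1) K :=
    hasLog_of_mapsTo_slitPlane (by fun_prop) fun w hw => Or.inl (hre w hw)
  exact (hmul.div (hasLog_const hf₁ K)).congr fun w _ => (mul_div_cancel_right₀ _ hf₁).symm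

theorem not_hasLog_sphere (z : ℂ) {R : ℝ} (hR : 0 < R) :
    ¬ HasLog (fun w => w - z) (Metric.sphere z R) := by
  rintro ⟨g, hg, hgexp⟩
  have hmem (θ : ℝ) : circleMap z R θ ∈ Metric.sphere z R := circleMap_mem_sphere z hR.le θ
  have hconst := log_sub_eq_of_isPreconnected (isPreconnected_univ (α := ℝ))
    (g := fun θ => g (circleMap z R θ)) (g' := fun θ => Complex.log R + θ * Complex.I)
    (hg.comp (continuous_circleMap z R).continuousOn fun θ _ => hmem θ) (by fun_prop)
    (fun θ _ => by
      rw [hgexp _ (hmem θ), Complex.exp_add, Complex.exp_log (by exact_mod_cast hR.ne'), circleMap]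
      ring) (mem_univ 0) (mem_univ (2 * Real.pi))
  have hper : circleMap z R (2 * Real.pi) = circleMap z R 0 := by
    simpa using periodic_circleMap z R 0
  simp [hper] at hconst

theorem not_hasLog_frontier (hV : Bornology.IsBounded V) (hz : z ∈ V) :
    ¬ HasLog (fun w => w - z) (frontier V) := by
  classical
  intro hlog
  obtain ⟨G, hG⟩ := hlog.exists_continuousMap isClosed_frontier
  obtain ⟨R, hR, hVR⟩ := hV.subset_ball_lt 0 z
  -- Replacing `w - z` on `V` by an exponential removes the zero and leaves a large circle alone.
  have hcont : Continuous fun w => if w ∈ V then Complex.exp (G w) else w - z :=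
    continuous_if hG (by fun_prop) (by fun_prop)
  have hne (w : ℂ) : (if w ∈ V then Complex.exp (G w) else w - z) ≠ 0 := by
    split_ifs with hw
    · exact Complex.exp_ne_zero _
    · exact sub_ne_zero.2 fun h => hw (h ▸ hz)
  refine not_hasLog_sphere z hR
    (((hasLog_univ hcont hne).mono (subset_univ _)).congr fun w hw => ?_)
  exact (if_neg fun hwV => (Metric.mem_ball.1 (hVR hwV)).ne hw).symm

theorem hasLog_sub_congr {X : Type*} [TopologicalSpace X] {f : X → ℂ} {Y : Set X} {a b : ℂ}
    (hf : ContinuousOn f Y) (h : ∀ w ∈ Y, dist a b < dist (f w) a)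
    (hlog : HasLog (fun w => f w - a) Y) :
    HasLog (fun w => f w - b) Y :=
  hlog.of_norm_sub_lt (hf.sub continuousOn_const) fun w hw => by
    simpa [dist_eq_norm] using h w hw

theorem hasLog_sub_of_isPreconnected (hV : IsPreconnected V) (hK : IsCompact K) (hVK : Disjoint V K)
    (hub : ¬ Bornology.IsBounded V) (hz : z ∈ V) : HasLog (fun w => w - z) K := by
  obtain ⟨R, hKR⟩ := hK.isBounded.subset_closedBall 0
  obtain ⟨z₀, hz₀V, hz₀⟩ : ∃ z₀ ∈ V, z₀ ∉ Metric.closedBall (0 : ℂ) R :=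
    not_subset.1 fun h => hub (Metric.isBounded_closedBall.subset h)
  have hlog₀ : HasLog (fun w => w - z₀) K :=
    (isFull_of_convex (convex_closedBall _ _) Metric.isClosed_closedBall z₀ hz₀).mono hKR
  refine (hV.induction₂ (fun a b => HasLog (fun w => w - a) K ↔ HasLog (fun w => w - b) K)
    (fun a ha => ?_) (fun _ _ _ _ _ _ => Iff.trans) (fun _ _ _ _ => Iff.symm) hz₀V hz).1 hlog₀
  obtain ⟨r, hr, hdisj⟩ :=
    Metric.isOpen_iff.1 hK.isClosed.isOpen_compl a (hVK.notMem_of_mem_left ha)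
  have hfar (w) (hw : w ∈ K) : r ≤ dist w a := not_lt.1 fun h => hdisj h hw
  filter_upwards [mem_nhdsWithin_of_mem_nhds (Metric.ball_mem_nhds a (half_pos hr))] with b hb
  rw [Metric.mem_ball] at hb
  refine ⟨hasLog_sub_congr continuousOn_id fun w hw => ?_,
    hasLog_sub_congr continuousOn_id fun w hw => ?_⟩
  · rw [dist_comm a b]
    linarith [hfar w hw]
  · linarith [hfar w hw, dist_triangle w b a]

end FullSets

section FilledHull

/-- The filled hull of `Y`: the union of `Y` and of the bounded components of its complement. -/
def filledHull {X : Type*} [TopologicalSpace X] [Bornology X] (Y : Set X) : Set X :=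
  {z | Bornology.IsBounded (connectedComponentIn Yᶜ z)}

theorem frontier_connectedComponentIn_compl_subset {X : Type*} [TopologicalSpace X]
    [LocallyConnectedSpace X] {Y : Set X} (hY : IsClosed Y) (x : X) :
    frontier (connectedComponentIn Yᶜ x) ⊆ Y := by
  rintro w ⟨hwcl, hwint⟩
  by_contra hwY
  have hopen (y : X) : IsOpen (connectedComponentIn Yᶜ y) := hY.isOpen_compl.connectedComponentIn
  rw [(hopen x).interior_eq] at hwint
  obtain ⟨v, hvw, hvx⟩ := mem_closure_iff.1 hwcl _ (hopen w) (mem_connectedComponentIn hwY)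
  rw [connectedComponentIn_eq hvx, ← connectedComponentIn_eq hvw] at hwint
  exact hwint (mem_connectedComponentIn hwY)

section Bornological

variable {X : Type*} [TopologicalSpace X] [Bornology X] {Y V : Set X}

theorem subset_filledHull (Y : Set X) : Y ⊆ filledHull Y := fun z hz => by
  have : connectedComponentIn Yᶜ z = ∅ := connectedComponentIn_eq_empty (not_not.2 hz)
  simp [filledHull, this]

theorem subset_filledHull_of_isPreconnected (hV : IsPreconnected V) (hVY : Disjoint V Y)
    (hne : (V ∩ filledHull Y).Nonempty) : V ⊆ filledHull Y := by
  obtain ⟨x, hxV, hx⟩ := hne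
  intro z hz
  have hzx := hV.subset_connectedComponentIn hxV hVY.subset_compl_right hz
  change Bornology.IsBounded _
  rw [← connectedComponentIn_eq hzx]
  exact hx

theorem isClosed_filledHull [LocallyConnectedSpace X] (hY : IsClosed Y) :
    IsClosed (filledHull Y) := by
  refine isOpen_compl_iff.1 (isOpen_iff_mem_nhds.2 fun z hz => ?_)
  have hzY : z ∈ Yᶜ := fun h => hz (subset_filledHull Y h)
  refine mem_of_superset (hY.isOpen_compl.connectedComponentIn.mem_nhds
    (mem_connectedComponentIn hzY)) fun w hw hwY => hz ?_
  exact subset_filledHull_of_isPreconnected isPreconnected_connectedComponentIn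
    (subset_compl_iff_disjoint_right.1 (connectedComponentIn_subset _ _))
    ⟨w, hw, hwY⟩ (mem_connectedComponentIn hzY)

end Bornological

section Plane

variable {Y B : Set ℂ}

theorem not_hasLog_of_mem_filledHull {z : ℂ} (hY : IsClosed Y) (hz : z ∈ filledHull Y)
    (hzY : z ∉ Y) : ¬ HasLog (fun w => w - z) Y := fun h =>
  not_hasLog_frontier hz (mem_connectedComponentIn hzY)
    (h.mono (frontier_connectedComponentIn_compl_subset hY z))

theorem IsFull.filledHull_subset (hB : IsFull B) (hY : IsClosed Y) (hYB : Y ⊆ B) :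
    filledHull Y ⊆ B := fun z hz => by
  by_contra hzB
  exact not_hasLog_of_mem_filledHull hY hz (fun hzY => hzB (hYB hzY)) ((hB z hzB).mono hYB)

theorem isCompact_filledHull (hY : IsCompact Y) : IsCompact (filledHull Y) := by
  obtain ⟨R, hR⟩ := hY.isBounded.subset_closedBall 0
  exact (isCompact_closedBall (0 : ℂ) R).of_isClosed_subset (isClosed_filledHull hY.isClosed)
    ((isFull_of_convex (convex_closedBall _ _) Metric.isClosed_closedBall).filledHull_subset
      hY.isClosed hR)

theorem isFull_filledHull (hY : IsCompact Y) : IsFull (filledHull Y) := by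
  intro z hz
  refine hasLog_sub_of_isPreconnected (V := connectedComponentIn Yᶜ z)
    isPreconnected_connectedComponentIn (isCompact_filledHull hY)
    (disjoint_left.2 fun w hw hwY => hz ?_) hz
    (mem_connectedComponentIn fun h => hz (subset_filledHull Y h))
  exact (connectedComponentIn_eq hw ▸ hwY : Bornology.IsBounded (connectedComponentIn Yᶜ z))

end Plane

section NormedSpace

variable {E : Type*} [NormedAddCommGroup E] [NormedSpace ℝ E] {Y : Set E} {p q : E}

theorem isCompact_segment (p q : E) : IsCompact (segment ℝ p q) := by
  rw [← convexHull_pair (𝕜 := ℝ)]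
  exact (toFinite _).isCompact_convexHull ℝ

theorem dist_le_of_mem_segment {a b : E} (ha : a ∈ segment ℝ p q) (hb : b ∈ segment ℝ p q) :
    dist a b ≤ dist p q := by
  rw [← Metric.diam_pair (x := p), ← convexHull_diam, convexHull_pair]
  exact Metric.dist_le_diam_of_mem (isCompact_segment p q).isBounded ha hb

theorem exists_segment_subset_filledHull (hY : IsClosed Y) (hp : p ∈ filledHull Y)
    (hne : (segment ℝ p q ∩ Y).Nonempty) :
    ∃ p' ∈ segment ℝ p q ∩ Y, segment ℝ p p' ⊆ filledHull Y := by
  obtain ⟨p', ⟨hp's, hp'Y⟩, hmin⟩ := ((isCompact_segment p q).inter_right hY).exists_isMinOn hne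
    (continuous_const.dist continuous_id : Continuous (dist p)).continuousOn
  refine ⟨p', ⟨hp's, hp'Y⟩, fun w hw => ?_⟩
  rcases eq_or_ne w p' with rfl | hwp'
  · exact subset_filledHull Y hp'Y
  have hwdist : dist w p < dist p' p := by
    rw [dist_comm w, dist_comm p', ← dist_add_dist_of_mem_segment hw]
    exact lt_add_of_pos_right _ (dist_pos.2 hwp')
  refine subset_filledHull_of_isPreconnected (V := segment ℝ p q ∩ Metric.ball p (dist p' p))
    ((convex_segment p q).inter (convex_ball _ _)).isPreconnected
    (disjoint_left.2 fun v hv hvY => ?_)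
    ⟨p, ⟨left_mem_segment ℝ p q, Metric.mem_ball_self (dist_nonneg.trans_lt hwdist)⟩, hp⟩
    ⟨(convex_segment p q).segment_subset (left_mem_segment ℝ p q) hp's hw, hwdist⟩
  have := isMinOn_iff.1 hmin v ⟨hv.1, hvY⟩
  rw [dist_comm p, dist_comm p] at this
  exact this.not_gt hv.2

end NormedSpace

end FilledHull

section UniformLocalConnectedness

/-- Uniform local connectedness of a subset of a metric space: sufficiently close points of `Y` lie
in a common small connected subset of `Y`. -/
def UniformlyLocallyConnected {E : Type*} [PseudoMetricSpace E] (Y : Set E) : Prop :=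
  ∀ ε > 0, ∃ δ > 0, ∀ p ∈ Y, ∀ q ∈ Y, dist p q < δ →
    q ∈ connectedComponentIn (Y ∩ Metric.closedBall p ε) p

theorem uniformlyLocallyConnected_filledHull {E : Type*} [NormedAddCommGroup E] [NormedSpace ℝ E]
    {Y : Set E} (h : UniformlyLocallyConnected Y) (hY : IsClosed Y) :
    UniformlyLocallyConnected (filledHull Y) := by
  intro ε hε
  obtain ⟨δ, hδ, hYδ⟩ := h (ε / 2) (half_pos hε)
  refine ⟨min δ (ε / 2), by positivity, fun p hp q hq hpq => ?_⟩
  have hball : segment ℝ p q ⊆ Metric.closedBall p (ε / 2) :=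
    (segment_subset_closedBall_left p q).trans
      (Metric.closedBall_subset_closedBall (hpq.le.trans (min_le_right _ _)))
  have hball' : segment ℝ p q ⊆ Metric.closedBall p ε :=
    hball.trans (Metric.closedBall_subset_closedBall (by linarith))
  have hconn {a b : E} (ha : a ∈ segment ℝ p q) (hb : b ∈ segment ℝ p q)
      (hab : segment ℝ a b ⊆ filledHull Y) :
      segment ℝ a b ⊆ connectedComponentIn (filledHull Y ∩ Metric.closedBall p ε) a :=
    (convex_segment a b).isPreconnected.subset_connectedComponentIn (left_mem_segment ℝ a b)
      (subset_inter hab (((convex_segment p q).segment_subset ha hb).trans hball'))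
  have hps := left_mem_segment ℝ p q
  have hqs := right_mem_segment ℝ p q
  rcases (segment ℝ p q ∩ Y).eq_empty_or_nonempty with hempty | hne
  · exact hconn hps hqs (subset_filledHull_of_isPreconnected (convex_segment p q).isPreconnected
      (disjoint_iff_inter_eq_empty.2 hempty) ⟨p, hps, hp⟩) hqs
  obtain ⟨p', ⟨hp's, hp'Y⟩, hpp'⟩ := exists_segment_subset_filledHull hY hp hne
  obtain ⟨q', ⟨hq's, hq'Y⟩, hqq'⟩ :=
    exists_segment_subset_filledHull (q := p) hY hq (by rwa [segment_symm])
  rw [segment_symm] at hq's hqq'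
  have hp'q' := hYδ p' hp'Y q' hq'Y
    ((dist_le_of_mem_segment hp's hq's).trans_lt (hpq.trans_le (min_le_left _ _)))
  rw [connectedComponentIn_eq (hconn hps hp's hpp' (right_mem_segment ℝ p p')),
    connectedComponentIn_eq (connectedComponentIn_mono p' (inter_subset_inter
      (subset_filledHull Y) (Metric.closedBall_subset_closedBall' ?_)) hp'q')]
  · exact hconn hq's hqs hqq' (right_mem_segment ℝ q' q)
  · linarith [Metric.mem_closedBall.1 (hball hp's)]

theorem uniformlyLocallyConnected_range {X E : Type*} [TopologicalSpace X] [CompactSpace X]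
    [LocallyConnectedSpace X] [MetricSpace E] {f : X → E} (hf : Continuous f) :
    UniformlyLocallyConnected (range f) := by
  intro ε hε
  have hex (a : X) : ∃ U : Set X, IsOpen U ∧ a ∈ U ∧ IsPreconnected U ∧
      ∀ x ∈ U, dist (f x) (f a) < ε / 2 := by
    obtain ⟨U, hUsub, hUo, haU, hU⟩ := locallyConnectedSpace_iff_subsets_isOpen_isConnected.1
      ‹_› a _ (hf.continuousAt (Metric.ball_mem_nhds (f a) (half_pos hε)))
    exact ⟨U, hUo, haU, hU.isPreconnected, hUsub⟩
  choose U hUo hU_mem hU hUf using hex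
  obtain ⟨δ, hδ, hfar⟩ : ∃ δ > 0, ∀ z ∈ (⋃ c ∈ {c : X × X | f c.1 = f c.2}, U c.1 ×ˢ U c.2)ᶜ,
      δ ≤ dist (f z.1) (f z.2) := by
    refine (isOpen_biUnion fun c _ => (hUo c.1).prod (hUo c.2)).isClosed_compl.isCompact
      |>.exists_forall_le' (by fun_prop) fun z hz => dist_pos.2 fun hfz => hz ?_
    exact mem_biUnion (x := z) hfz ⟨hU_mem z.1, hU_mem z.2⟩
  refine ⟨δ, hδ, ?_⟩
  rintro _ ⟨s, rfl⟩ _ ⟨t, rfl⟩ hst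
  obtain ⟨⟨a, b⟩, hab, hs, ht⟩ : ∃ c : X × X, f c.1 = f c.2 ∧ s ∈ U c.1 ∧ t ∈ U c.2 := by
    by_contra! hcon
    exact (hfar (s, t) (by simpa using fun a b h hs => hcon (a, b) h hs)).not_gt hst
  dsimp only at hab hs ht
  have hconn {c : X} (hc : f c = f a) : f '' U c ⊆ range f ∩ Metric.closedBall (f s) ε := by
    rintro _ ⟨x, hx, rfl⟩
    refine ⟨mem_range_self x, Metric.mem_closedBall.2 ?_⟩
    have := hc ▸ hUf c x hx
    linarith [dist_triangle_right (f x) (f s) (f a), hUf a s hs]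
  have hUa := ((hU a).image f hf.continuousOn).subset_connectedComponentIn
    (mem_image_of_mem f hs) (hconn rfl)
  rw [connectedComponentIn_eq (hUa (mem_image_of_mem f (hU_mem a))), hab]
  exact ((hU b).image f hf.continuousOn).subset_connectedComponentIn
    (mem_image_of_mem f (hU_mem b)) (hconn hab.symm) (mem_image_of_mem f ht)

end UniformLocalConnectedness

section ChainPaths

/-- `IsChainPath C δ p`: the path `p` is a concatenation of straight segments of length less
than `δ` with end points in `C`. These are the polygonal approximations from which a path inside `C`
is obtained in the limit. -/
inductive IsChainPath {E : Type*} [NormedAddCommGroup E] [NormedSpace ℝ E] (C : Set E) (δ : ℝ) :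
    ∀ {x y : E}, Path x y → Prop
  | single {x y : E} (hx : x ∈ C) (hy : y ∈ C) (hxy : dist x y < δ) :
    IsChainPath C δ (Path.segment x y)
  | trans {x y z : E} {p : Path x y} {q : Path y z} (hp : IsChainPath C δ p)
    (hq : IsChainPath C δ q) : IsChainPath C δ (p.trans q)

variable {E : Type*} [NormedAddCommGroup E] [NormedSpace ℝ E] {C B Q : Set E} {δ ε : ℝ} {x y : E}

theorem IsChainPath.mono {p : Path x y} (hp : IsChainPath C δ p) (hCB : C ⊆ B) :
    IsChainPath B δ p := by
  induction hp with
  | single hx hy hxy => exact .single (hCB hx) (hCB hy) hxy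
  | trans _ _ hp hq => exact hp.trans hq

theorem IsChainPath.range_subset {p : Path x y} (hp : IsChainPath C δ p) (hB : Convex ℝ B)
    (hCB : C ⊆ B) : range p ⊆ B := by
  induction hp with
  | single hx hy hxy => simpa using hB.segment_subset (hCB hx) (hCB hy)
  | trans _ _ hp hq => exact (Path.trans_range _ _).trans_subset (union_subset hp hq)

theorem IsChainPath.range_subset_thickening {p : Path x y} (hp : IsChainPath C δ p) :
    range p ⊆ Metric.thickening δ C := by
  induction hp with
  | @single x y hx hy hxy =>
    rw [Path.range_segment]
    exact fun w hw => Metric.mem_thickening_iff.2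
      ⟨x, hx, (dist_le_of_mem_segment hw (left_mem_segment ℝ x y)).trans_lt hxy⟩
  | trans _ _ hp hq => exact (Path.trans_range _ _).trans_subset (union_subset hp hq)

theorem exists_isChainPath (hQ : IsPreconnected Q) (hδ : 0 < δ) (hx : x ∈ Q) (hy : y ∈ Q) :
    ∃ p : Path x y, IsChainPath Q δ p := by
  refine hQ.induction₂' (fun x y => ∃ p : Path x y, IsChainPath Q δ p) (fun a ha => ?_)
    (fun _ _ _ _ _ _ ⟨p, hp⟩ ⟨q, hq⟩ => ⟨_, hp.trans hq⟩) hx hy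
  filter_upwards [mem_nhdsWithin_of_mem_nhds (Metric.ball_mem_nhds a hδ), self_mem_nhdsWithin]
    with b hb hbQ
  exact ⟨⟨_, .single ha hbQ (Metric.mem_ball'.1 hb)⟩, ⟨_, .single hbQ ha hb⟩⟩

theorem IsChainPath.exists_refinement {p : Path x y} (hp : IsChainPath C δ p) (hδε : δ ≤ ε)
    (hC : ∀ p ∈ C, ∀ q ∈ C, dist p q < δ → q ∈ connectedComponentIn (C ∩ Metric.closedBall p ε) p)
    {δ' : ℝ} (hδ' : 0 < δ') :
    ∃ p' : Path x y, IsChainPath C δ' p' ∧ ∀ t, dist (p t) (p' t) ≤ 2 * ε := by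
  induction hp with
  | @single x y hx hy hxy =>
    have hyx := hC x hx y hy hxy
    have hsub := connectedComponentIn_subset (C ∩ Metric.closedBall x ε) x
    obtain ⟨p', hp'⟩ := exists_isChainPath isPreconnected_connectedComponentIn hδ'
      (mem_connectedComponentIn (connectedComponentIn_nonempty_iff.1 ⟨y, hyx⟩)) hyx
    refine ⟨p', hp'.mono (hsub.trans inter_subset_left), fun t => ?_⟩
    have h₁ : Path.segment x y t ∈ segment ℝ x y := Path.range_segment x y ▸ mem_range_self t
    have h₂ := hp'.range_subset (convex_closedBall x ε) (hsub.trans inter_subset_right)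
      (mem_range_self t)
    linarith [dist_triangle_right (Path.segment x y t) (p' t) x, Metric.mem_closedBall.1 h₂,
      dist_le_of_mem_segment h₁ (left_mem_segment ℝ x y)]
  | trans _ _ hp hq =>
    obtain ⟨p', hp', hpp'⟩ := hp
    obtain ⟨q', hq', hqq'⟩ := hq
    refine ⟨_, hp'.trans hq', fun t => ?_⟩
    rw [Path.trans_apply, Path.trans_apply]
    split_ifs
    exacts [hpp' _, hqq' _]

theorem joinedIn_of_tendsto_zero {E : Type*} [MetricSpace E] [CompleteSpace E] {C : Set E} {x y : E}
    (hC : IsClosed C) (hne : C.Nonempty) {δ : ℕ → ℝ} (hδ : Tendsto δ atTop (𝓝 0)) (p : ℕ → Path x y)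
    (hpC : ∀ n, range (p n) ⊆ Metric.thickening (δ n) C)
    (hp : ∀ n t, dist (p n t) (p (n + 1) t) ≤ 1 / 2 / 2 ^ n) : JoinedIn C x y := by
  obtain ⟨F, hF⟩ := cauchySeq_tendsto_of_complete (cauchySeq_of_le_geometric_two
    (f := fun n => (p n).toContinuousMap) fun n => (ContinuousMap.dist_le (by positivity)).2 (hp n))
  have hFt (t : I) : Tendsto (fun n => p n t) atTop (𝓝 (F t)) :=
    ((continuous_eval_const t).tendsto F).comp hF
  have h₀ : F 0 = x := tendsto_nhds_unique (hFt 0) (by simp)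
  have h₁ : F 1 = y := tendsto_nhds_unique (hFt 1) (by simp)
  refine ⟨⟨F, h₀, h₁⟩, fun t => (hC.mem_iff_infDist_zero hne).2 ?_⟩
  refine tendsto_nhds_unique ((Metric.continuous_infDist_pt C).continuousAt.tendsto.comp (hFt t))
    (squeeze_zero (fun _ => Metric.infDist_nonneg) (fun n => ?_) hδ)
  exact ((Metric.mem_thickening_iff_infDist_lt hne).1 (hpC n (mem_range_self t))).le

theorem UniformlyLocallyConnected.joinedIn [CompleteSpace E] (h : UniformlyLocallyConnected C)
    (hC : IsClosed C) (hconn : IsPreconnected C) (hx : x ∈ C) (hy : y ∈ C) : JoinedIn C x y := by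
  have hscale (n : ℕ) : ∃ δ > 0, δ ≤ (1 / 4 / 2 ^ n : ℝ) ∧ ∀ p ∈ C, ∀ q ∈ C, dist p q < δ →
      q ∈ connectedComponentIn (C ∩ Metric.closedBall p (1 / 4 / 2 ^ n)) p := by
    obtain ⟨δ, hδ, hCδ⟩ := h (1 / 4 / 2 ^ n) (by positivity)
    exact ⟨min δ (1 / 4 / 2 ^ n), by positivity, min_le_right _ _,
      fun p hp q hq hpq => hCδ p hp q hq (hpq.trans_le (min_le_left _ _))⟩
  choose δ hδ hδ_le hCδ using hscale
  have hstep (n : ℕ) (p : {p : Path x y // IsChainPath C (δ n) p}) :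
      ∃ p' : {p : Path x y // IsChainPath C (δ (n + 1)) p},
        ∀ t, dist (p.1 t) (p'.1 t) ≤ 2 * (1 / 4 / 2 ^ n) := by
    obtain ⟨p', hp', hdist⟩ := p.2.exists_refinement (hδ_le n) (hCδ n) (hδ (n + 1))
    exact ⟨⟨p', hp'⟩, hdist⟩
  choose next hnext using hstep
  obtain ⟨p₀, hp₀⟩ := exists_isChainPath hconn (hδ 0) hx hy
  let P (n : ℕ) : {p : Path x y // IsChainPath C (δ n) p} := Nat.rec ⟨p₀, hp₀⟩ next n
  refine joinedIn_of_tendsto_zero hC ⟨x, hx⟩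
    (squeeze_zero (fun n => (hδ n).le) hδ_le ?_) (fun n => (P n).1)
    (fun n => (P n).2.range_subset_thickening) fun n t => (hnext n (P n) t).trans_eq (by ring)
  simpa [div_eq_mul_inv] using
    (tendsto_pow_atTop_nhds_zero_of_lt_one (r := (2 : ℝ)⁻¹)
      (by norm_num) (by norm_num)).const_mul 4⁻¹

end ChainPaths

section Splitting

/-- `ContinuousNonzeroOn f Y`: the function `f` is continuous and zero-free on `Y`. -/
def ContinuousNonzeroOn {X : Type*} [TopologicalSpace X] (f : X → ℂ) (Y : Set X) : Prop :=
  ContinuousOn f Y ∧ ∀ w ∈ Y, f w ≠ 0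

/-- `SplitsOn u A B`: on `A ∩ B`, the function `u` is the quotient of a continuous zero-free
function on `A` and one on `B`, that is, `u` is a multiplicative Čech coboundary for the
cover of `A ∪ B` by `A` and `B`. -/
def SplitsOn {X : Type*} [TopologicalSpace X] (u : X → ℂ) (A B : Set X) : Prop :=
  ∃ a b : X → ℂ, ContinuousNonzeroOn a A ∧ ContinuousNonzeroOn b B ∧
    ∀ w ∈ A ∩ B, u w * b w = a w

section Topological

variable {X : Type*} [TopologicalSpace X] {f g u : X → ℂ} {A A' B B' R₁ R₂ Y Y' Y₁ Y₂ : Set X}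

theorem ContinuousNonzeroOn.mono (h : ContinuousNonzeroOn f Y) (hY : Y' ⊆ Y) :
    ContinuousNonzeroOn f Y' :=
  ⟨h.1.mono hY, fun w hw => h.2 w (hY hw)⟩

theorem ContinuousNonzeroOn.mul (hf : ContinuousNonzeroOn f Y) (hg : ContinuousNonzeroOn g Y) :
    ContinuousNonzeroOn (fun w => f w * g w) Y :=
  ⟨hf.1.mul hg.1, fun w hw => mul_ne_zero (hf.2 w hw) (hg.2 w hw)⟩

theorem ContinuousNonzeroOn.div (hf : ContinuousNonzeroOn f Y) (hg : ContinuousNonzeroOn g Y) :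
    ContinuousNonzeroOn (fun w => f w / g w) Y :=
  ⟨hf.1.div hg.1 hg.2, fun w hw => div_ne_zero (hf.2 w hw) (hg.2 w hw)⟩

theorem continuousNonzeroOn_exp {G : X → ℂ} (hG : Continuous G) (Y : Set X) :
    ContinuousNonzeroOn (fun w => Complex.exp (G w)) Y :=
  ⟨hG.cexp.continuousOn, fun _ _ => Complex.exp_ne_zero _⟩

theorem ContinuousNonzeroOn.exists_union (hf : ContinuousNonzeroOn f Y₁)
    (hg : ContinuousNonzeroOn g Y₂) (hY₁ : IsClosed Y₁) (hY₂ : IsClosed Y₂)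
    (h : EqOn f g (Y₁ ∩ Y₂)) :
    ∃ k, ContinuousNonzeroOn k (Y₁ ∪ Y₂) ∧ EqOn k f Y₁ ∧ EqOn k g Y₂ := by
  obtain ⟨k, hk, hkf, hkg⟩ := exists_continuousOn_union hY₁ hY₂ hf.1 hg.1 h
  exact ⟨k, ⟨hk, fun w hw => hw.elim (fun h => hkf h ▸ hf.2 w h) fun h => hkg h ▸ hg.2 w h⟩,
    hkf, hkg⟩

theorem ContinuousNonzeroOn.exists_mem_nhds_hasLog (hf : ContinuousNonzeroOn f Y)
    (hY : IsClosed Y) (x : X) : ∃ U ∈ 𝓝 x, HasLog f (Y ∩ U) := by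
  by_cases hx : x ∈ Y
  · have hev : ∀ᶠ w in 𝓝[Y] x, ‖f w - f x‖ < ‖f x‖ := by
      refine ((hf.1 x hx).sub continuousWithinAt_const).norm.eventually_lt_const ?_
      simpa using hf.2 x hx
    obtain ⟨U, hU, hUf⟩ := mem_nhdsWithin_iff_exists_mem_nhds_inter.1 hev
    exact ⟨U, hU, (hasLog_const (hf.2 x hx) _).of_norm_sub_lt (hf.1.mono inter_subset_left)
      fun w hw => hUf hw.symm⟩
  · exact ⟨Yᶜ, hY.isOpen_compl.mem_nhds hx, by simpa using ⟨0, by simp⟩⟩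

theorem HasLog.exists_mem_nhds_preimage [NormalSpace X] {T : Type*} [TopologicalSpace T]
    [T2Space T] {t : X → T} {c : T} {K : Set X} (ht : Continuous t) (hK : IsCompact K)
    (hKcl : IsClosed K) (hf : ContinuousOn f K) (h : HasLog f (K ∩ t ⁻¹' {c})) :
    ∃ U ∈ 𝓝 c, HasLog f (K ∩ t ⁻¹' U) := by
  obtain ⟨G, hG⟩ := h.exists_continuousMap (hKcl.inter (isClosed_singleton.preimage ht))
  have hGexp : ContinuousOn (fun w => Complex.exp (G w)) K := G.continuous.cexp.continuousOn
  let N : Set X := {w ∈ K | ‖Complex.exp (G w)‖ ≤ ‖f w - Complex.exp (G w)‖}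
  have hNcl : IsClosed N := hKcl.isClosed_le hGexp.norm (hf.sub hGexp).norm
  have hNc : IsCompact (t '' N) := (hK.of_isClosed_subset hNcl (sep_subset _ _)).image ht
  refine ⟨(t '' N)ᶜ, hNc.isClosed.isOpen_compl.mem_nhds ?_, ?_⟩
  · rintro ⟨w, ⟨hwK, hw⟩, rfl⟩
    rw [hG w ⟨hwK, rfl⟩] at hw
    simp [← hG w ⟨hwK, rfl⟩, Complex.exp_ne_zero] at hw
  · refine HasLog.of_norm_sub_lt ⟨G, G.continuous.continuousOn, fun _ _ => rfl⟩
      (hf.mono inter_subset_left) fun w hw => not_le.1 fun h => hw.2 ⟨w, ⟨hw.1, h⟩, rfl⟩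

theorem SplitsOn.mono (h : SplitsOn u A B) (hA : A' ⊆ A) (hB : B' ⊆ B) : SplitsOn u A' B' := by
  obtain ⟨a, b, ha, hb, hab⟩ := h
  exact ⟨a, b, ha.mono hA, hb.mono hB, fun w hw => hab w ⟨hA hw.1, hB hw.2⟩⟩

theorem HasLog.splitsOn [NormalSpace X] (h : HasLog u (A ∩ B)) (hA : IsClosed A)
    (hB : IsClosed B) : SplitsOn u A B := by
  obtain ⟨G, hG⟩ := h.exists_continuousMap (hA.inter hB)
  exact ⟨fun w => Complex.exp (G w), fun _ => 1, continuousNonzeroOn_exp G.continuous A,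
    ⟨continuousOn_const, fun _ _ => one_ne_zero⟩, fun w hw => by simp only [hG w hw, mul_one]⟩

theorem SplitsOn.union [NormalSpace X] (h₁ : SplitsOn u (A ∩ R₁) (B ∩ R₁))
    (h₂ : SplitsOn u (A ∩ R₂) (B ∩ R₂)) (hA : IsClosed A) (hB : IsClosed B)
    (hR₁ : IsClosed R₁) (hR₂ : IsClosed R₂) (hu : ∀ w ∈ A ∩ B, u w ≠ 0)
    (hlog : ∀ φ, ContinuousNonzeroOn φ ((A ∪ B) ∩ (R₁ ∩ R₂)) →
      HasLog φ ((A ∪ B) ∩ (R₁ ∩ R₂))) :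
    SplitsOn u (A ∩ (R₁ ∪ R₂)) (B ∩ (R₁ ∪ R₂)) := by
  obtain ⟨a₁, b₁, ha₁, hb₁, h₁⟩ := h₁
  obtain ⟨a₂, b₂, ha₂, hb₂, h₂⟩ := h₂
  have hR := hR₁.inter hR₂
  obtain ⟨φ, hφ, hφa, hφb⟩ := ContinuousNonzeroOn.exists_union (Y₁ := A ∩ (R₁ ∩ R₂))
    (Y₂ := B ∩ (R₁ ∩ R₂)) ((ha₁.mono (by grind)).div (ha₂.mono (by grind)))
    ((hb₁.mono (by grind)).div (hb₂.mono (by grind))) (hA.inter hR) (hB.inter hR) (by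
      rintro w ⟨⟨hwA, hw₁, hw₂⟩, hwB, -⟩
      dsimp only
      rw [← h₁ w ⟨⟨hwA, hw₁⟩, hwB, hw₁⟩, ← h₂ w ⟨⟨hwA, hw₂⟩, hwB, hw₂⟩,
        mul_div_mul_left _ _ (hu w ⟨hwA, hwB⟩)])
  rw [← union_inter_distrib_right] at hφ
  obtain ⟨G, hG⟩ := (hlog φ hφ).exists_continuousMap ((hA.union hB).inter hR)
  have hexp := continuousNonzeroOn_exp G.continuous
  obtain ⟨a, ha, haa₁, haa₂⟩ := ha₁.exists_union (ha₂.mul (hexp _)) (hA.inter hR₁) (hA.inter hR₂)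
    (by
      rintro w ⟨⟨hwA, hw₁⟩, -, hw₂⟩
      dsimp only
      rw [hG w ⟨Or.inl hwA, hw₁, hw₂⟩, hφa ⟨hwA, hw₁, hw₂⟩, mul_div_cancel₀ _ (ha₂.2 w ⟨hwA, hw₂⟩)])
  obtain ⟨b, hb, hbb₁, hbb₂⟩ := hb₁.exists_union (hb₂.mul (hexp _)) (hB.inter hR₁) (hB.inter hR₂)
    (by
      rintro w ⟨⟨hwB, hw₁⟩, -, hw₂⟩
      dsimp only
      rw [hG w ⟨Or.inr hwB, hw₁, hw₂⟩, hφb ⟨hwB, hw₁, hw₂⟩, mul_div_cancel₀ _ (hb₂.2 w ⟨hwB, hw₂⟩)])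
  rw [← inter_union_distrib_left] at ha hb
  refine ⟨a, b, ha, hb, ?_⟩
  rintro w ⟨⟨hwA, hw | hw⟩, hwB, -⟩
  · rw [haa₁ ⟨hwA, hw⟩, hbb₁ ⟨hwB, hw⟩, h₁ w ⟨⟨hwA, hw⟩, hwB, hw⟩]
  · rw [haa₂ ⟨hwA, hw⟩, hbb₂ ⟨hwB, hw⟩, ← mul_assoc, h₂ w ⟨⟨hwA, hw⟩, hwB, hw⟩]

end Topological

theorem Icc_induction {P : Set ℝ → Prop} (hmono : ∀ s t, s ⊆ t → P t → P s)
    (hloc : ∀ x, ∃ U ∈ 𝓝 x, P U)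
    (hglue : ∀ a b c, a ≤ b → b ≤ c → P (Icc a b) → P (Icc b c) → P (Icc a c)) {a b : ℝ}
    (hab : a ≤ b) : P (Icc a b) := by
  choose U hU hPU using hloc
  obtain ⟨t, ht₀, ht, ⟨m, hm⟩, htU⟩ := exists_monotone_Icc_subset_open_cover_Icc hab
    (c := fun x : ℝ => Subtype.val ⁻¹' interior (U x))
    (fun x => isOpen_interior.preimage continuous_subtype_val)
    (fun y _ => mem_iUnion.2 ⟨y, mem_interior_iff_mem_nhds.2 (hU y)⟩)
  have hP (n : ℕ) : P (Icc a (t n)) := by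
    induction n with
    | zero =>
      refine hmono _ _ (fun y hy => ?_) (hPU a)
      rw [ht₀, Icc_self, mem_singleton_iff] at hy
      exact hy.symm ▸ mem_of_mem_nhds (hU a)
    | succ n ih =>
      obtain ⟨x, hx⟩ := htU n
      refine hglue _ (t n) _ (t n).2.1 (ht n.le_succ) ih (hmono _ _ (fun y hy => ?_) (hPU x))
      exact interior_subset (hx (a := ⟨y, (t n).2.1.trans hy.1, hy.2.trans (t (n + 1)).2.2⟩) hy)
  exact hm m le_rfl ▸ hP m

theorem ContinuousNonzeroOn.hasLog_of_isCompact_real {φ : ℝ → ℂ} {Y : Set ℝ}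
    (hφ : ContinuousNonzeroOn φ Y) (hY : IsCompact Y) : HasLog φ Y := by
  obtain ⟨M, hM, hYM⟩ := hY.isBounded.subset_closedBall_lt 0 0
  have key : HasLog φ (Y ∩ Icc (-M) M) := by
    refine Icc_induction (P := fun s => HasLog φ (Y ∩ s))
      (fun s t hst h => h.mono (inter_subset_inter_right Y hst))
      (hφ.exists_mem_nhds_hasLog hY.isClosed) (fun a b c hab hbc h₁ h₂ => ?_) (by linarith)
    rw [← Icc_union_Icc_eq_Icc hab hbc, inter_union_distrib_left]
    refine h₁.union h₂ (hY.isClosed.inter isClosed_Icc) (hY.isClosed.inter isClosed_Icc)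
      Subset.rfl Subset.rfl (Subsingleton.isPreconnected ?_) Subset.rfl Subset.rfl
    exact subsingleton_singleton.anti fun x hx => le_antisymm hx.1.2.2 hx.2.2.1
  exact key.mono (subset_inter Subset.rfl fun x hx => by simpa [abs_le] using hYM hx)

theorem ContinuousNonzeroOn.hasLog_inter_re_preimage {φ : ℂ → ℂ} {K : Set ℂ} {c : ℝ}
    (hK : IsCompact K) (hφ : ContinuousNonzeroOn φ (K ∩ Complex.re ⁻¹' {c})) :
    HasLog φ (K ∩ Complex.re ⁻¹' {c}) := by
  set F := K ∩ Complex.re ⁻¹' {c}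
  have hF : IsCompact F := hK.inter_right (isClosed_singleton.preimage Complex.continuous_re)
  have hι (w) (hw : w ∈ F) : (⟨c, w.im⟩ : ℂ) = w := Complex.ext hw.2.symm rfl
  have hmaps : MapsTo (fun s : ℝ => (⟨c, s⟩ : ℂ)) (Complex.im '' F) F := by
    rintro _ ⟨w, hw, rfl⟩
    exact (hι w hw).symm ▸ hw
  have hlog : HasLog (fun s : ℝ => φ ⟨c, s⟩) (Complex.im '' F) := by
    refine ContinuousNonzeroOn.hasLog_of_isCompact_real ⟨hφ.1.comp ?_ hmaps,
      fun s hs => hφ.2 _ (hmaps hs)⟩ (hF.image Complex.continuous_im)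
    exact (Complex.equivRealProdCLM.symm.continuous.comp (Continuous.prodMk_right c)).continuousOn
  exact (hlog.comp Complex.continuous_im.continuousOn (mapsTo_image _ _)).congr
    fun w hw => congrArg φ (hι w hw).symm

theorem ContinuousNonzeroOn.splitsOn {u : ℂ → ℂ} {A B : Set ℂ} (hu : ContinuousNonzeroOn u (A ∩ B))
    (hA : IsCompact A) (hB : IsCompact B) : SplitsOn u A B := by
  obtain ⟨M, hM, hABM⟩ := (hA.union hB).isBounded.subset_closedBall_lt 0 0
  have hre (s : Set ℝ) (hs : IsClosed s) : IsClosed (Complex.re ⁻¹' s) :=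
    hs.preimage Complex.continuous_re
  have key : SplitsOn u (A ∩ Complex.re ⁻¹' Icc (-M) M) (B ∩ Complex.re ⁻¹' Icc (-M) M) := by
    refine Icc_induction (P := fun s => SplitsOn u (A ∩ Complex.re ⁻¹' s) (B ∩ Complex.re ⁻¹' s))
      (fun s t hst h => h.mono (by gcongr) (by gcongr)) (fun c => ?_)
      (fun a b c hab hbc h₁ h₂ => ?_) (by linarith)
    · obtain ⟨U, hU, hlog⟩ := HasLog.exists_mem_nhds_preimage Complex.continuous_re (hA.inter hB)
        (hA.inter hB).isClosed hu.1 (ContinuousNonzeroOn.hasLog_inter_re_preimage (c := c)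
          (hA.inter hB) (hu.mono inter_subset_left))
      obtain ⟨V, hV, hVcl, hVU⟩ := exists_mem_nhds_isClosed_subset hU
      exact ⟨V, hV, (hlog.mono (by grind)).splitsOn (hA.isClosed.inter (hre V hVcl))
        (hB.isClosed.inter (hre V hVcl))⟩
    · rw [← Icc_union_Icc_eq_Icc hab hbc, preimage_union]
      refine h₁.union h₂ hA.isClosed hB.isClosed (hre _ isClosed_Icc) (hre _ isClosed_Icc) hu.2
        fun φ hφ => ?_
      rw [← preimage_inter, Icc_inter_Icc_eq_singleton hab hbc] at hφ ⊢
      exact hφ.hasLog_inter_re_preimage (hA.union hB)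
  have hsub : A ∪ B ⊆ Complex.re ⁻¹' Icc (-M) M := fun w hw =>
    abs_le.1 ((Complex.abs_re_le_norm w).trans (by simpa using hABM hw))
  exact key.mono (subset_inter Subset.rfl (subset_union_left.trans hsub))
    (subset_inter Subset.rfl (subset_union_right.trans hsub))

end Splitting

section Bridges

theorem not_hasLog_union_of_mapsTo_slitPlane {X : Type*} [TopologicalSpace X] {f : X → ℂ}
    {C J : Set X} {p q : X} (hC : IsPreconnected C) (hJ : IsPreconnected J) (hp : p ∈ C ∩ J)
    (hq : q ∈ C ∩ J) (hfC : ∀ w ∈ C, f w ∈ Complex.slitPlane)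
    (hfJ : ∀ w ∈ J, -f w ∈ Complex.slitPlane) (him_p : 0 < (f p).im) (him_q : (f q).im < 0) :
    ¬ HasLog f (C ∪ J) := by
  intro hlog
  have hf := hlog.continuousOn
  obtain ⟨g, hg, hgf⟩ := hlog
  have hgC : g p - Complex.log (f p) = g q - Complex.log (f q) :=
    log_sub_eq_of_isPreconnected hC (hg.mono subset_union_left)
      ((hf.mono subset_union_left).clog hfC) (fun w hw => by
        rw [hgf w (Or.inl hw), Complex.exp_log (Complex.slitPlane_ne_zero (hfC w hw))]) hp.1 hq.1
  have hgJ : g p - (Complex.log (-f p) + Real.pi * Complex.I) =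
      g q - (Complex.log (-f q) + Real.pi * Complex.I) :=
    log_sub_eq_of_isPreconnected hJ (hg.mono subset_union_right)
      (((hf.mono subset_union_right).neg.clog hfJ).add continuousOn_const) (fun w hw => by
        simp only [Pi.add_apply, Pi.neg_apply]
        rw [hgf w (Or.inr hw), Complex.exp_add, Complex.exp_pi_mul_I,
          Complex.exp_log (Complex.slitPlane_ne_zero (hfJ w hw)), mul_neg_one, neg_neg]) hp.2 hq.2
  simp only [Complex.log, norm_neg, Complex.arg_neg_eq_arg_sub_pi_of_im_pos him_p,
    Complex.arg_neg_eq_arg_add_pi_of_im_neg him_q, Complex.ofReal_sub, Complex.ofReal_add]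
    at hgC hgJ
  exact Complex.two_pi_I_ne_zero (by linear_combination hgJ - hgC)

/-- The Cayley-type transform with zero `η i` and pole `-η i`. It sends the real line to the unit
circle, and its logarithm is the difference of those of `ζ - η i` and `ζ + η i`. -/
noncomputable def cayley (η : ℝ) (ζ : ℂ) : ℂ := (ζ - η * Complex.I) / (ζ + η * Complex.I)

theorem cayley_mem_slitPlane {η : ℝ} {ζ : ℂ} (hη : 0 < η) (hζ : 3 * η < ‖ζ‖) :
    cayley η ζ ∈ Complex.slitPlane := by
  have hnorm : ‖(2 * η * Complex.I : ℂ)‖ < ‖ζ + η * Complex.I‖ := by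
    have := norm_sub_le (ζ + η * Complex.I) (η * Complex.I)
    simp only [add_sub_cancel_right, norm_mul, Complex.norm_real, Complex.norm_I, mul_one,
      Real.norm_of_nonneg hη.le, RCLike.norm_ofNat] at this ⊢
    linarith
  have h0 : ζ + η * Complex.I ≠ 0 := norm_pos_iff.1 ((norm_nonneg _).trans_lt hnorm)
  have heq : cayley η ζ = 1 + -(2 * η * Complex.I / (ζ + η * Complex.I)) := by
    rw [cayley]
    field_simp
    ring
  rw [heq]
  refine Complex.mem_slitPlane_of_norm_lt_one ?_
  rwa [norm_neg, norm_div, div_lt_one (norm_pos_iff.2 h0)]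

theorem cayley_ofReal {η : ℝ} (hη : η ≠ 0) (s : ℝ) :
    cayley η s = ((s ^ 2 - η ^ 2) / (s ^ 2 + η ^ 2) : ℝ) +
      (-(2 * s * η) / (s ^ 2 + η ^ 2) : ℝ) * Complex.I := by
  have h0 : (s : ℂ) + η * Complex.I ≠ 0 := fun h => hη (by simpa using congrArg Complex.im h)
  have h1 : (s ^ 2 + η ^ 2 : ℂ) ≠ 0 := by exact_mod_cast (by positivity : s ^ 2 + η ^ 2 ≠ 0)
  rw [cayley, div_eq_iff h0]
  push_cast
  field_simp
  linear_combination 2 * (s : ℂ) * (η : ℂ) ^ 2 * Complex.I_sq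

theorem cayley_ofReal_im {η : ℝ} (hη : η ≠ 0) (s : ℝ) :
    (cayley η s).im = -(2 * s * η) / (s ^ 2 + η ^ 2) := by
  rw [cayley_ofReal hη, Complex.add_im, Complex.ofReal_im, Complex.im_ofReal_mul, Complex.I_im,
    mul_one, zero_add]

theorem neg_cayley_ofReal_mem_slitPlane {η : ℝ} (hη : η ≠ 0) (s : ℝ) :
    -cayley η s ∈ Complex.slitPlane := by
  rcases eq_or_ne s 0 with rfl | hs
  · left
    rw [cayley_ofReal hη]
    simp [hη]
  · right
    rw [Complex.neg_im, cayley_ofReal_im hη]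
    have : s ^ 2 + η ^ 2 ≠ 0 := by positivity
    simp [hs, hη, this]

theorem exists_not_hasLog_sub_mul_I {X : Type*} [TopologicalSpace X] {ζ : X → ℂ} {C J : Set X}
    {p q : X} {η : ℝ} (hC : IsPreconnected C) (hJ : IsPreconnected J) (hp : p ∈ C ∩ J)
    (hq : q ∈ C ∩ J) (hη : 0 < η) (hζC : ∀ w ∈ C, 3 * η < ‖ζ w‖) (hζJ : ∀ w ∈ J, (ζ w).im = 0)
    (hζp : (ζ p).re < 0) (hζq : 0 < (ζ q).re) :
    ∃ τ : ℝ, |τ| = η ∧ ¬ HasLog (fun w => ζ w - τ * Complex.I) (C ∪ J) := by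
  by_contra! hlog
  have hζ (w) (hw : w ∈ J) : ζ w = ((ζ w).re : ℂ) := Complex.ext rfl (hζJ w hw)
  refine not_hasLog_union_of_mapsTo_slitPlane (f := fun w => cayley η (ζ w)) hC hJ hp hq
    (fun w hw => cayley_mem_slitPlane hη (hζC w hw)) (fun w hw => ?_) ?_ ?_ ?_
  · rw [hζ w hw]
    exact neg_cayley_ofReal_mem_slitPlane hη.ne' _
  · rw [hζ p hp.2, cayley_ofReal_im hη.ne']
    exact div_pos (by nlinarith) (by positivity)
  · rw [hζ q hq.2, cayley_ofReal_im hη.ne']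
    exact div_neg_of_neg_of_pos (by nlinarith) (by positivity)
  · exact ((hlog η (abs_of_pos hη)).div (hlog (-η) (by rw [abs_neg, abs_of_pos hη]))).congr
      fun w _ => by simp [cayley, sub_eq_add_neg]

theorem lineMap_sub_midpoint_div {p q : ℂ} (hpq : p ≠ q) (t : ℝ) :
    (AffineMap.lineMap p q t - midpoint ℝ p q) / (q - p) = ((t - 1 / 2 : ℝ) : ℂ) := by
  rw [div_eq_iff (sub_ne_zero.2 hpq.symm)]
  simp only [midpoint, AffineMap.lineMap_apply, vsub_eq_sub, vadd_eq_add, Complex.real_smul]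
  push_cast [invOf_eq_inv]
  ring

theorem exists_not_hasLog_union_segment {C : Set ℂ} {p q : ℂ} (hC : IsClosed C)
    (hCp : IsPreconnected C) (hp : p ∈ C) (hq : q ∈ C) (hpq : p ≠ q)
    (h : C ∩ segment ℝ p q ⊆ {p, q}) :
    ∃ z ∉ C ∪ segment ℝ p q, ¬ HasLog (fun w => w - z) (C ∪ segment ℝ p q) := by
  set m := midpoint ℝ p q
  have hv0 : q - p ≠ 0 := sub_ne_zero.2 hpq.symm
  have hζJ (w) (hw : w ∈ segment ℝ p q) : ((w - m) / (q - p)).im = 0 := by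
    rw [segment_eq_image_lineMap] at hw
    obtain ⟨t, -, rfl⟩ := hw
    rw [lineMap_sub_midpoint_div hpq, Complex.ofReal_im]
  have hζp : ((p - m) / (q - p)).re = 0 - 1 / 2 := by
    rw [← Complex.ofReal_re (0 - 1 / 2), ← lineMap_sub_midpoint_div hpq,
      AffineMap.lineMap_apply_zero]
  have hζq : ((q - m) / (q - p)).re = 1 - 1 / 2 := by
    rw [← Complex.ofReal_re (1 - 1 / 2), ← lineMap_sub_midpoint_div hpq,
      AffineMap.lineMap_apply_one]
  have hmC : m ∉ C := fun hm => by
    simpa [m, hpq, midpoint_eq_left_iff, midpoint_eq_right_iff] using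
      h ⟨hm, midpoint_mem_segment p q⟩
  obtain ⟨r, hr, hrC⟩ := Metric.isOpen_iff.1 hC.isOpen_compl _ hmC
  have hr' : 0 < r / ‖q - p‖ := div_pos hr (norm_pos_iff.2 hv0)
  have hζC (w) (hw : w ∈ C) : r / ‖q - p‖ ≤ ‖(w - m) / (q - p)‖ := by
    rw [norm_div]
    gcongr
    exact not_lt.1 fun hlt => hrC (mem_ball_iff_norm.2 hlt) hw
  obtain ⟨τ, hτ, hlog⟩ := exists_not_hasLog_sub_mul_I (ζ := fun w => (w - m) / (q - p))
    (η := r / ‖q - p‖ / 4) hCp (convex_segment p q).isPreconnected ⟨hp, left_mem_segment ℝ p q⟩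
    ⟨hq, right_mem_segment ℝ p q⟩ (by positivity) (fun w hw => by linarith [hζC w hw]) hζJ
    (by rw [hζp]; norm_num) (by rw [hζq]; norm_num)
  have hpole : (m + τ * Complex.I * (q - p) - m) / (q - p) = τ * Complex.I := by
    rw [add_sub_cancel_left, mul_div_cancel_right₀ _ hv0]
  refine ⟨m + τ * Complex.I * (q - p), ?_, fun h => hlog ?_⟩
  · rintro (hz | hz)
    · have := hζC _ hz
      rw [hpole, norm_mul, Complex.norm_real, Real.norm_eq_abs, hτ, Complex.norm_I] at this
      linarith
    · have : τ = 0 := by simpa [-add_sub_cancel_left, hpole] using hζJ _ hz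
      rw [this, abs_zero] at hτ
      linarith
  · refine (h.div (hasLog_const hv0 _)).congr fun w _ => ?_
    field_simp
    ring

end Bridges

section Separation

theorem exists_isCompact_separation {X : Type*} [TopologicalSpace X] [T2Space X] {Y : Set X}
    (hY : IsCompact Y) {p q : X} (hp : p ∈ Y) (hq : q ∈ Y) (h : q ∉ connectedComponentIn Y p) :
    ∃ M N : Set X, IsCompact M ∧ IsCompact N ∧ M ∪ N = Y ∧ Disjoint M N ∧ p ∈ M ∧ q ∈ N := by
  have : CompactSpace Y := isCompact_iff_compactSpace.1 hY
  have hq' : (⟨q, hq⟩ : Y) ∉ connectedComponent (⟨p, hp⟩ : Y) := fun hmem =>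
    h (connectedComponentIn_eq_image hp ▸ mem_image_of_mem _ hmem)
  rw [connectedComponent_eq_iInter_isClopen, mem_iInter, not_forall] at hq'
  obtain ⟨⟨s, hs, hps⟩, hqs⟩ := hq'
  refine ⟨Subtype.val '' s, Subtype.val '' sᶜ, hs.isClosed.isCompact.image continuous_subtype_val,
    hs.compl.isClosed.isCompact.image continuous_subtype_val, ?_, ?_, ⟨_, hps, rfl⟩, ⟨_, hqs, rfl⟩⟩
  · rw [← image_union, union_compl_self, image_univ, Subtype.range_val]
  · exact (disjoint_image_iff Subtype.val_injective).2 disjoint_compl_right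

theorem exists_segment_inter_subset_pair {E : Type*} [NormedAddCommGroup E] [NormedSpace ℝ E]
    {M N : Set E} (hM : IsClosed M) (hN : IsClosed N) {p q : E} (hp : p ∈ M) (hq : q ∈ N) :
    ∃ p' ∈ M ∩ segment ℝ p q, ∃ q' ∈ N ∩ segment ℝ p q,
      (M ∪ N) ∩ segment ℝ p' q' ⊆ {p', q'} := by
  have hseg := isCompact_segment p q
  obtain ⟨⟨p', q'⟩, ⟨hp', hq'⟩, hmin⟩ := ((hseg.inter_left hM).prod
    (hseg.inter_left hN)).exists_isMinOn
    ⟨(p, q), ⟨hp, left_mem_segment ℝ p q⟩, ⟨hq, right_mem_segment ℝ p q⟩⟩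
    continuous_dist.continuousOn
  refine ⟨p', hp', q', hq', fun w ⟨hw, hws⟩ => ?_⟩
  have hwpq : w ∈ segment ℝ p q := (convex_segment p q).segment_subset hp'.2 hq'.2 hws
  have hsum := dist_add_dist_of_mem_segment hws
  rcases hw with hw | hw
  · have : dist p' q' ≤ dist w q' := isMinOn_iff.1 hmin (w, q') ⟨⟨hw, hwpq⟩, hq'⟩
    exact Or.inl (dist_le_zero.1 (by rw [dist_comm]; linarith))
  · have : dist p' q' ≤ dist p' w := isMinOn_iff.1 hmin (p', w) ⟨hp', ⟨hw, hwpq⟩⟩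
    exact Or.inr (dist_le_zero.1 (by linarith))

end Separation

section Components

section Topological

variable {X : Type*} [TopologicalSpace X] {Y V : Set X} {x : X}

theorem subset_connectedComponentIn_of_inter_nonempty (hV : IsPreconnected V) (hVY : V ⊆ Y)
    (hne : (V ∩ connectedComponentIn Y x).Nonempty) : V ⊆ connectedComponentIn Y x := by
  obtain ⟨y, hyV, hy⟩ := hne
  rw [connectedComponentIn_eq hy]
  exact hV.subset_connectedComponentIn hyV hVY

theorem isClosed_connectedComponentIn (hY : IsClosed Y) (x : X) :
    IsClosed (connectedComponentIn Y x) := by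
  by_cases hx : x ∈ Y
  · refine isClosed_of_closure_subset
      (isPreconnected_connectedComponentIn.closure.subset_connectedComponentIn ?_ ?_)
    · exact subset_closure (mem_connectedComponentIn hx)
    · exact closure_minimal (connectedComponentIn_subset Y x) hY
  · rw [connectedComponentIn_eq_empty hx]
    exact isClosed_empty

theorem not_subset_of_disjoint_connectedComponentIn (hY : IsClosed Y) (hV : IsPreconnected V)
    (hne : V.Nonempty) (hdisj : Disjoint V (connectedComponentIn Y x))
    (hmeet : (closure V ∩ connectedComponentIn Y x).Nonempty) : ¬ V ⊆ Y := by
  intro hVY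
  obtain ⟨v, hv⟩ := hne
  exact disjoint_left.1 hdisj hv (subset_connectedComponentIn_of_inter_nonempty hV.closure
    (closure_minimal hVY hY) hmeet (subset_closure hv))

end Topological

section Plane

variable {Y B C D M N T : Set ℂ} {p q x : ℂ}

theorem filledHull_connectedComponentIn_union_subset (hY : IsCompact Y) (hB : IsFull B)
    (hBcl : IsClosed B) (hT : IsClosed T) (hTB : T ⊆ B)
    (hlog : ∀ v ∉ Y ∪ B, HasLog (fun w => w - v) (connectedComponentIn Y x ∪ T)) :
    filledHull (connectedComponentIn Y x ∪ T) ⊆ connectedComponentIn Y x ∪ B := by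
  set C := connectedComponentIn Y x
  have hC : IsClosed C := isClosed_connectedComponentIn hY.isClosed x
  intro z hz
  by_contra hzCB
  set V := connectedComponentIn (C ∪ B)ᶜ z
  have hzV : z ∈ V := mem_connectedComponentIn hzCB
  have hVCB : Disjoint V (C ∪ B) :=
    subset_compl_iff_disjoint_right.1 (connectedComponentIn_subset _ _)
  have hVhull : V ⊆ filledHull (C ∪ T) :=
    subset_filledHull_of_isPreconnected isPreconnected_connectedComponentIn
      (hVCB.mono_right (union_subset_union_right C hTB)) ⟨z, hzV, hz⟩
  have hfr : frontier V ⊆ C ∪ B :=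
    frontier_connectedComponentIn_compl_subset (hC.union hBcl) z
  have hmeet : (closure V ∩ C).Nonempty := by
    by_contra hdisj
    have hV : Bornology.IsBounded V := Bornology.IsBounded.subset
      (t := connectedComponentIn (C ∪ T)ᶜ z) hz (connectedComponentIn_mono z
        (compl_subset_compl.2 (union_subset_union_right C hTB)))
    exact not_hasLog_frontier hV hzV ((hB z fun h => hzCB (Or.inr h)).mono fun w hw =>
      (hfr hw).resolve_left fun hwC => hdisj ⟨w, frontier_subset_closure hw, hwC⟩)
  obtain ⟨v, hvV, hvY⟩ := not_subset.1 (not_subset_of_disjoint_connectedComponentIn hY.isClosed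
    isPreconnected_connectedComponentIn ⟨z, hzV⟩ (hVCB.mono_right subset_union_left) hmeet)
  have hvB : v ∉ B := fun h => disjoint_left.1 hVCB hvV (Or.inr h)
  have hvC : v ∉ C := fun h => disjoint_left.1 hVCB hvV (Or.inl h)
  exact not_hasLog_of_mem_filledHull (hC.union hT) (hVhull hvV)
    (fun h => h.elim hvC fun h => hvB (hTB h)) (hlog v fun h => h.elim hvY hvB)

theorem isFull_of_filledHull_subset (hY : IsCompact Y) (h : filledHull Y ⊆ Y) : IsFull Y :=
  h.antisymm (subset_filledHull Y) ▸ isFull_filledHull hY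

variable {ι : Type*} {K : ι → Set ℂ}

theorem isFull_connectedComponentIn_iInter (hK : IsCompact (⋂ i, K i)) (hfull : ∀ i, IsFull (K i))
    (x : ℂ) : IsFull (connectedComponentIn (⋂ i, K i) x) := by
  refine isFull_of_filledHull_subset (hK.of_isClosed_subset
    (isClosed_connectedComponentIn hK.isClosed x) (connectedComponentIn_subset _ _)) ?_
  have := filledHull_connectedComponentIn_union_subset (B := ∅) (T := ∅) (x := x) hK
    (isFull_of_convex convex_empty isClosed_empty) isClosed_empty isClosed_empty Subset.rfl
    fun v hv => ?_
  · simpa using this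
  · simp only [union_empty, mem_iInter, not_forall] at hv ⊢
    obtain ⟨i, hi⟩ := hv
    exact (hfull i v hi).mono ((connectedComponentIn_subset _ _).trans (iInter_subset K i))

theorem filledHull_connectedComponentIn_iInter_union_segment_subset (hK : IsCompact (⋂ i, K i))
    (hfull : ∀ i, IsFull (K i)) (hB : Convex ℝ B) (hBcl : IsClosed B) (hp : p ∈ B) (hq : q ∈ B)
    (hpq : connectedComponentIn (⋂ i, K i) x ∩ segment ℝ p q ⊆ {p, q})
    (hconn : ∀ i, q ∈ connectedComponentIn (K i ∩ B) p) :
    filledHull (connectedComponentIn (⋂ i, K i) x ∪ segment ℝ p q) ⊆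
      connectedComponentIn (⋂ i, K i) x ∪ B := by
  have hBfull := isFull_of_convex hB hBcl
  have hseg : segment ℝ p q ⊆ B := hB.segment_subset hp hq
  refine filledHull_connectedComponentIn_union_subset hK hBfull hBcl
    (isCompact_segment p q).isClosed hseg fun v hv => ?_
  obtain ⟨hvK, hvB⟩ := not_or.1 hv
  rw [mem_iInter, not_forall] at hvK
  obtain ⟨i, hi⟩ := hvK
  have hpi : p ∈ K i ∩ B := connectedComponentIn_nonempty_iff.1 ⟨q, hconn i⟩
  exact (hfull i v hi).union (hBfull v hvB) (isClosed_connectedComponentIn hK.isClosed x)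
    (isCompact_segment p q).isClosed ((connectedComponentIn_subset _ _).trans (iInter_subset K i))
    hseg isPreconnected_connectedComponentIn
    (hpq.trans (pair_subset (mem_connectedComponentIn hpi) (hconn i)))
    (connectedComponentIn_subset _ _)

theorem filledHull_union_segment_subset_of_disjoint (hC : IsCompact C) (hfull : IsFull C)
    (hM : IsClosed M) (hN : IsClosed N) (hMC : M ⊆ C) (hNC : N ⊆ C) (hMN : Disjoint M N)
    (hp : p ∈ M) (hq : q ∈ N) (hpq : C ∩ segment ℝ p q ⊆ {p, q}) (hD : IsClosed D)
    (hCD : C ∩ D ⊆ M ∪ N) (hhull : filledHull (C ∪ segment ℝ p q) ⊆ C ∪ D) :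
    filledHull (C ∪ segment ℝ p q) ⊆ C ∪ segment ℝ p q := by
  have hJ := (isCompact_segment p q).isClosed
  intro z hz
  by_contra hzCJ
  obtain ⟨hzC, hzJ⟩ := not_or.1 hzCJ
  have hlogC := hfull z hzC
  have hlogJ := isFull_of_convex (convex_segment p q) hJ z hzJ
  have hlogMJ : HasLog (fun w => w - z) (M ∪ segment ℝ p q) := by
    refine (hlogC.mono hMC).union hlogJ hM hJ Subset.rfl Subset.rfl isPreconnected_singleton
      (Q := {p}) (fun w ⟨hwM, hwJ⟩ => ?_) (singleton_subset_iff.2 ⟨hp, left_mem_segment ℝ p q⟩)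
    exact (hpq ⟨hMC hwM, hwJ⟩).resolve_right fun h => disjoint_left.1 hMN hwM (h ▸ hq)
  have hlog : HasLog (fun w => w - z) ((M ∪ segment ℝ p q) ∪ N) := by
    refine hlogMJ.union (hlogC.mono hNC) (hM.union hJ) hN Subset.rfl Subset.rfl
      isPreconnected_singleton (Q := {q}) (fun w ⟨hwMJ, hwN⟩ => ?_)
      (singleton_subset_iff.2 ⟨Or.inr (right_mem_segment ℝ p q), hq⟩)
    have hwM : w ∉ M := fun h => disjoint_left.1 hMN h hwN
    exact (hpq ⟨hNC hwN, hwMJ.resolve_left hwM⟩).resolve_left fun h => hwM (h ▸ hp)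
  set V := connectedComponentIn (C ∪ segment ℝ p q)ᶜ z
  have hVCJ : Disjoint V (C ∪ segment ℝ p q) :=
    subset_compl_iff_disjoint_right.1 (connectedComponentIn_subset _ _)
  have hzV : z ∈ V := mem_connectedComponentIn hzCJ
  have hVD : V ⊆ D := fun w hw => (hhull (subset_filledHull_of_isPreconnected
    isPreconnected_connectedComponentIn hVCJ ⟨z, hzV, hz⟩ hw)).resolve_left
    fun hwC => disjoint_left.1 hVCJ hw (Or.inl hwC)
  refine not_hasLog_frontier hz hzV (hlog.mono fun w hw => ?_)
  have hwD : w ∈ D := closure_minimal hVD hD (frontier_subset_closure hw)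
  have hwCJ : w ∈ C ∪ segment ℝ p q :=
    frontier_connectedComponentIn_compl_subset (hC.isClosed.union hJ) z hw
  rcases hwCJ with hwC | hwJ
  · exact (hCD ⟨hwC, hwD⟩).imp Or.inl id
  · exact Or.inl (Or.inr hwJ)

theorem UniformlyLocallyConnected.exists_forall {E : Type*} [PseudoMetricSpace E] [Finite ι]
    {K : ι → Set E} (h : ∀ i, UniformlyLocallyConnected (K i)) {ε : ℝ} (hε : 0 < ε) :
    ∃ δ > 0, δ ≤ ε ∧ ∀ i, ∀ p ∈ K i, ∀ q ∈ K i, dist p q < δ →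
      q ∈ connectedComponentIn (K i ∩ Metric.closedBall p ε) p := by
  choose δ hδ hKδ using fun i => h i ε hε
  obtain ⟨δ₀, ⟨hδ₀, hδ₀ε⟩, hδ₀δ⟩ := ((eventually_mem_set.2 (Ioc_mem_nhdsGT hε)).and
    (eventually_all.2 fun i => Ioc_mem_nhdsGT (hδ i))).exists
  refine ⟨δ₀, hδ₀, hδ₀ε, fun i p hp q hq hpq => hKδ i p hp q hq (hpq.trans_le (hδ₀δ i).2)⟩

theorem uniformlyLocallyConnected_connectedComponentIn_iInter [Finite ι]
    (hK : IsCompact (⋂ i, K i)) (hfull : ∀ i, IsFull (K i))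
    (hulc : ∀ i, UniformlyLocallyConnected (K i)) (x : ℂ) :
    UniformlyLocallyConnected (connectedComponentIn (⋂ i, K i) x) := by
  set C := connectedComponentIn (⋂ i, K i) x
  have hCK (i) : C ⊆ K i := (connectedComponentIn_subset _ _).trans (iInter_subset K i)
  have hC : IsCompact C := hK.of_isClosed_subset (isClosed_connectedComponentIn hK.isClosed x)
    (connectedComponentIn_subset _ _)
  intro ε hε
  obtain ⟨δ, hδ, hδε, hKδ⟩ :=
    UniformlyLocallyConnected.exists_forall hulc (ε := ε / 4) (by positivity)
  refine ⟨δ, hδ, fun p hp q hq hpq => ?_⟩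
  by_contra hsep
  obtain ⟨M, N, hM, hN, hMN, hdisj, hpM, hqN⟩ := exists_isCompact_separation
    (hC.inter_right Metric.isClosed_closedBall) ⟨hp, Metric.mem_closedBall_self hε.le⟩
    ⟨hq, by rw [Metric.mem_closedBall, dist_comm]; linarith⟩ hsep
  have hMC : M ⊆ C := fun w hw => (hMN.subset (Or.inl hw)).1
  have hNC : N ⊆ C := fun w hw => (hMN.subset (Or.inr hw)).1
  obtain ⟨p', ⟨hp', hp's⟩, q', ⟨hq', hq's⟩, hpair⟩ :=
    exists_segment_inter_subset_pair hM.isClosed hN.isClosed hpM hqN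
  have hnear (w) (hw : w ∈ segment ℝ p q) : dist w p < δ :=
    (dist_le_of_mem_segment hw (left_mem_segment ℝ p q)).trans_lt hpq
  have hinter : C ∩ segment ℝ p' q' ⊆ {p', q'} := fun w ⟨hwC, hws⟩ =>
    hpair ⟨hMN.superset ⟨hwC, Metric.mem_closedBall.2
      (by linarith [hnear w ((convex_segment p q).segment_subset hp's hq's hws)])⟩, hws⟩
  have hhull : filledHull (C ∪ segment ℝ p' q') ⊆ C ∪ Metric.closedBall p (ε / 2) := by
    refine filledHull_connectedComponentIn_iInter_union_segment_subset hK hfull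
      (convex_closedBall _ _) Metric.isClosed_closedBall
      (Metric.mem_closedBall.2 (by linarith [hnear p' hp's]))
      (Metric.mem_closedBall.2 (by linarith [hnear q' hq's])) hinter fun i =>
      connectedComponentIn_mono p' (inter_subset_inter_right _ ?_)
        (hKδ i p' (hCK i (hMC hp')) q' (hCK i (hNC hq'))
          ((dist_le_of_mem_segment hp's hq's).trans_lt hpq))
    exact Metric.closedBall_subset_closedBall' (by linarith [hnear p' hp's])
  obtain ⟨z, hz, hzlog⟩ := exists_not_hasLog_union_segment hC.isClosed
    isPreconnected_connectedComponentIn (hMC hp') (hNC hq')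
    (fun h => disjoint_left.1 hdisj hp' (h ▸ hq')) hinter
  exact hzlog (isFull_of_filledHull_subset (hC.union (isCompact_segment p' q'))
    (filledHull_union_segment_subset_of_disjoint hC (isFull_connectedComponentIn_iInter hK hfull x)
      hM.isClosed hN.isClosed hMC hNC hdisj hp' hq' hinter Metric.isClosed_closedBall
      ((inter_subset_inter_right _ (Metric.closedBall_subset_closedBall (by linarith))).trans
        hMN.superset) hhull) z hz)

theorem joinedIn_iInter [Finite ι] (hK : IsCompact (⋂ i, K i)) (hfull : ∀ i, IsFull (K i))
    (hulc : ∀ i, UniformlyLocallyConnected (K i)) {x y : ℂ}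
    (hxy : y ∈ connectedComponentIn (⋂ i, K i) x) : JoinedIn (⋂ i, K i) x y := by
  have hx : x ∈ ⋂ i, K i := connectedComponentIn_nonempty_iff.1 ⟨y, hxy⟩
  exact ((uniformlyLocallyConnected_connectedComponentIn_iInter hK hfull hulc x).joinedIn
    (isClosed_connectedComponentIn hK.isClosed x) isPreconnected_connectedComponentIn
    (mem_connectedComponentIn hx) hxy).mono (connectedComponentIn_subset _ _)

end Plane

end Components

section Homotopy

/-- `HomotopicIn K p q`: the paths `p` and `q` are homotopic relative to their endpoints through
points of `K`. -/
def HomotopicIn {X : Type*} [TopologicalSpace X] {x y : X} (K : Set X) (p q : Path x y) : Prop :=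
  ∃ F : p.Homotopy q, ∀ s, F s ∈ K

/-- `HasLogIncrement f c`: the function `f` on the unit interval has a continuous logarithm, and
that logarithm increases by `c` from `0` to `1`. For a closed curve `f` in `ℂ \ {0}`, `c` is
`2πi` times the winding number. -/
def HasLogIncrement (f : I → ℂ) (c : ℂ) : Prop :=
  ∃ g : I → ℂ, Continuous g ∧ (∀ t, Complex.exp (g t) = f t) ∧ g 1 - g 0 = c

theorem HasLogIncrement.unique {f : I → ℂ} {c d : ℂ} (h : HasLogIncrement f c)
    (h' : HasLogIncrement f d) : c = d := by
  obtain ⟨g, hg, hgf, rfl⟩ := h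
  obtain ⟨g', hg', hgf', rfl⟩ := h'
  have hconst := log_sub_eq_of_isPreconnected isPreconnected_univ hg.continuousOn hg'.continuousOn
    (fun t _ => (hgf t).trans (hgf' t).symm) (mem_univ 0) (mem_univ 1)
  linear_combination -hconst

theorem HasLogIncrement.mul {f g : I → ℂ} {c d : ℂ} (hf : HasLogIncrement f c)
    (hg : HasLogIncrement g d) : HasLogIncrement (fun t => f t * g t) (c + d) := by
  obtain ⟨l, hl, hlf, rfl⟩ := hf
  obtain ⟨m, hm, hmg, rfl⟩ := hg
  exact ⟨fun t => l t + m t, hl.add hm, fun t => by rw [Complex.exp_add, hlf, hmg], by ring⟩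

instance contractibleSpace_unitInterval : ContractibleSpace I :=
  (convex_Icc 0 1).contractibleSpace (nonempty_Icc.2 zero_le_one)

instance locallyPathConnectedSpace_unitInterval : LocallyPathConnectedSpace I :=
  (convex_Icc 0 1).locallyPathConnectedSpace ℝ

section Topological

variable {X : Type*} [TopologicalSpace X] {K S : Set X} {x y : X} {p q : Path x y}

theorem homotopicIn_of_simplyConnectedSpace [SimplyConnectedSpace S] (hp : ∀ t, p t ∈ S)
    (hq : ∀ t, q t ∈ S) : HomotopicIn S p q := by
  let lift (r : Path x y) (hr : ∀ t, r t ∈ S) :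
      Path (⟨x, r.source ▸ hr 0⟩ : S) ⟨y, r.target ▸ hr 1⟩ :=
    { toFun := fun t => ⟨r t, hr t⟩
      source' := Subtype.ext r.source
      target' := Subtype.ext r.target }
  obtain ⟨F⟩ := SimplyConnectedSpace.paths_homotopic (lift p hp) (lift q hq)
  exact ⟨F.map ⟨Subtype.val, continuous_subtype_val⟩, fun s => (F s).2⟩

theorem HomotopicIn.mem_left (h : HomotopicIn K p q) (t : I) : p t ∈ K := by
  obtain ⟨F, hF⟩ := h
  exact F.apply_zero t ▸ hF (0, t)

theorem HomotopicIn.mem_right (h : HomotopicIn K p q) (t : I) : q t ∈ K := by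
  obtain ⟨F, hF⟩ := h
  exact F.apply_one t ▸ hF (1, t)

theorem HomotopicIn.source_mem (h : HomotopicIn K p q) : x ∈ K := by
  simpa using h.mem_left 0

theorem HomotopicIn.target_mem (h : HomotopicIn K p q) : y ∈ K := by
  simpa using h.mem_left 1

theorem HomotopicIn.exists_hasLogIncrement (h : HomotopicIn K p q) {u : X → ℂ}
    (hu : ContinuousNonzeroOn u K) :
    ∃ c, HasLogIncrement (fun t => u (p t)) c ∧ HasLogIncrement (fun t => u (q t)) c := by
  obtain ⟨F, hF⟩ := h
  obtain ⟨G, hG, hGF⟩ := hasLog_univ (hu.1.comp_continuous F.continuous hF) fun s => hu.2 _ (hF s)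
  rw [continuousOn_univ] at hG
  replace hGF (s : I × I) : Complex.exp (G s) = u (F s) := hGF s trivial
  have hconst (e : I) (he : ∀ s, F (s, e) = F (0, e)) : G (1, e) = G (0, e) := by
    have := log_sub_eq_of_isPreconnected isPreconnected_univ (g := fun s => G (s, e))
      (g' := fun _ => G (0, e)) (by fun_prop) (by fun_prop)
      (fun s _ => by rw [hGF, hGF, he s]) (mem_univ 0) (mem_univ 1)
    linear_combination -this
  have h₀ := hconst 0 fun s => by rw [F.source, F.source]
  have h₁ := hconst 1 fun s => by rw [F.target, F.target]
  refine ⟨G (0, 1) - G (0, 0), ⟨fun t => G (0, t), by fun_prop, fun t => ?_, rfl⟩,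
    fun t => G (1, t), by fun_prop, fun t => ?_, congrArg₂ _ h₁ h₀⟩
  · exact (hGF _).trans (congrArg u (F.apply_zero t))
  · exact (hGF _).trans (congrArg u (F.apply_one t))

theorem continuousOn_range_extend {T Z : Type*} [TopologicalSpace T] [CompactSpace T] [T2Space X]
    [TopologicalSpace Z] {F : T → X} {l : T → Z} (hF : Continuous F) (hl : Continuous l)
    (h : l.FactorsThrough F) (e : X → Z) : ContinuousOn (Function.extend F l e) (range F) := by
  have hquot : IsQuotientMap (rangeFactorization F) :=
    (hF.rangeFactorization.isClosedMap).isQuotientMap hF.rangeFactorization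
      rangeFactorization_surjective
  rw [continuousOn_iff_continuous_domRestrict, hquot.continuous_iff]
  exact hl.congr fun a => (h.extend_apply e a).symm

theorem hasLog_range_of_simplyConnectedSpace {T : Type*} [TopologicalSpace T] [CompactSpace T]
    [SimplyConnectedSpace T] [LocallyPathConnectedSpace T] [T2Space X] [SimplyConnectedSpace S]
    {F : T → X} (hF : Continuous F) (hFS : ∀ a, F a ∈ S) {u : X → ℂ}
    (hu : ContinuousNonzeroOn u S) : HasLog u (range F) := by
  obtain ⟨l, hl, hlu⟩ := hasLog_univ (hu.1.comp_continuous hF hFS) fun a => hu.2 _ (hFS a)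
  rw [continuousOn_univ] at hl
  have hfib : l.FactorsThrough F := fun a b hab => by
    let γ : Path a b := PathConnectedSpace.somePath a b
    let loop : Path (F a) (F a) := (γ.map hF).cast rfl hab
    obtain ⟨c, hc, hc₀⟩ := (homotopicIn_of_simplyConnectedSpace (S := S) (p := loop)
      (q := Path.refl (F a)) (fun t => hFS (γ t)) fun _ => hFS a).exists_hasLogIncrement hu
    have hloop : HasLogIncrement (fun t => u (loop t)) (l b - l a) :=
      ⟨fun t => l (γ t), by fun_prop, fun t => hlu _ trivial, by simp⟩
    have hrefl : HasLogIncrement (fun t => u (Path.refl (F a) t)) 0 :=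
      ⟨fun _ => l a, continuous_const, fun _ => hlu _ trivial, sub_self _⟩
    exact (sub_eq_zero.1 ((hloop.unique hc).trans (hc₀.unique hrefl))).symm
  refine ⟨Function.extend F l 0, continuousOn_range_extend hF hl hfib 0, ?_⟩
  rintro _ ⟨a, rfl⟩
  rw [hfib.extend_apply]
  exact hlu a trivial

end Topological

section Plane

variable {S K₀ K₁ K₂ : Set ℂ} {x y : ℂ} {p q a b c : Path x y}

theorem continuousNonzeroOn_sub {z : ℂ} (hz : z ∉ S) : ContinuousNonzeroOn (fun w => w - z) S :=
  ⟨by fun_prop, fun _ hw h => hz (sub_eq_zero.1 h ▸ hw)⟩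

theorem HomotopicIn.exists_isFull_subset [SimplyConnectedSpace S] (h : HomotopicIn S p q) :
    ∃ K ⊆ S, IsCompact K ∧ IsFull K ∧ UniformlyLocallyConnected K ∧ HomotopicIn K p q := by
  obtain ⟨F, hF⟩ := h
  have hR : IsCompact (range F) := isCompact_range F.continuous
  refine ⟨filledHull (range F), fun z hz => ?_, isCompact_filledHull hR, isFull_filledHull hR,
    uniformlyLocallyConnected_filledHull (uniformlyLocallyConnected_range F.continuous)
      hR.isClosed, F, fun s => subset_filledHull _ (mem_range_self s)⟩
  by_contra hzS
  exact not_hasLog_of_mem_filledHull hR.isClosed hz (fun ⟨s, hs⟩ => hzS (hs ▸ hF s))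
    (hasLog_range_of_simplyConnectedSpace F.continuous hF (continuousNonzeroOn_sub hzS))

theorem ContinuousNonzeroOn.hasLogIncrement_eq {u : ℂ → ℂ} {m n : ℂ}
    (hu : ContinuousNonzeroOn u (K₀ ∩ (K₁ ∪ K₂))) (hK₀ : IsCompact K₀) (hK₁ : IsCompact K₁)
    (hK₂ : IsCompact K₂) (hab : HomotopicIn K₀ a b) (hac : HomotopicIn K₁ a c)
    (hbc : HomotopicIn K₂ b c) (hm : HasLogIncrement (fun t => u (a t)) m)
    (hn : HasLogIncrement (fun t => u (b t)) n) : m = n := by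
  obtain ⟨α, β, hα, hβ, huβ⟩ := hu.splitsOn hK₀ (hK₁.union hK₂)
  obtain ⟨c₀, hαa, hαb⟩ := hab.exists_hasLogIncrement hα
  obtain ⟨c₁, hβa, hβc⟩ := hac.exists_hasLogIncrement (hβ.mono subset_union_left)
  obtain ⟨c₂, hβb, hβc'⟩ := hbc.exists_hasLogIncrement (hβ.mono subset_union_right)
  have hma : m + c₁ = c₀ := HasLogIncrement.unique
    (by simpa only [fun t => huβ (a t) ⟨hab.mem_left t, Or.inl (hac.mem_left t)⟩] using hm.mul hβa)
    hαa
  have hnb : n + c₂ = c₀ := HasLogIncrement.unique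
    (by simpa only [fun t => huβ (b t) ⟨hab.mem_right t, Or.inr (hbc.mem_left t)⟩] using hn.mul hβb)
    hαb
  linear_combination hma - hnb - hβc.unique hβc'

theorem mem_connectedComponentIn_of_homotopicIn (hK₀ : IsCompact K₀) (hK₁ : IsCompact K₁)
    (hK₂ : IsCompact K₂) (hab : HomotopicIn K₀ a b) (hac : HomotopicIn K₁ a c)
    (hbc : HomotopicIn K₂ b c) : y ∈ connectedComponentIn (K₀ ∩ K₁ ∩ K₂) x := by
  have hx : x ∈ K₀ ∩ K₁ ∩ K₂ := ⟨⟨hab.source_mem, hac.source_mem⟩, hbc.source_mem⟩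
  have hy : y ∈ K₀ ∩ K₁ ∩ K₂ := ⟨⟨hab.target_mem, hac.target_mem⟩, hbc.target_mem⟩
  by_contra hxy
  obtain ⟨M, N, hM, hN, hMN, hdisj, hxM, hyN⟩ :=
    exists_isCompact_separation ((hK₀.inter hK₁).inter hK₂) hx hy hxy
  obtain ⟨h, hhM, hhN, -⟩ := exists_continuous_zero_one_of_isClosed hM.isClosed hN.isClosed hdisj
  let G (w : ℂ) : ℂ := 2 * Real.pi * Complex.I * h w
  have hG : Continuous G := by fun_prop
  -- `u` winds once along `a`, on `K₀ ∩ K₁`, and not at all along `b`, on `K₀ ∩ K₂`.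
  obtain ⟨u, hu, hu₁, hu₂⟩ := (continuousNonzeroOn_exp hG (K₀ ∩ K₁)).exists_union
    (g := 1) (Y₂ := K₀ ∩ K₂) ⟨continuousOn_const, fun _ _ => one_ne_zero⟩
    (hK₀.inter hK₁).isClosed (hK₀.inter hK₂).isClosed fun w ⟨⟨hw₀, hw₁⟩, _, hw₂⟩ => by
      rcases hMN.superset ⟨⟨hw₀, hw₁⟩, hw₂⟩ with hw | hw
      · simp [G, hhM hw]
      · simp [G, hhN hw, Complex.exp_two_pi_mul_I]
  rw [← inter_union_distrib_left] at hu
  have hua : HasLogIncrement (fun t => u (a t)) (2 * Real.pi * Complex.I) :=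
    ⟨fun t => G (a t), by fun_prop, fun t => (hu₁ ⟨hab.mem_left t, hac.mem_left t⟩).symm,
      by simp [G, hhM hxM, hhN hyN]⟩
  have hub : HasLogIncrement (fun t => u (b t)) 0 :=
    ⟨0, continuous_const, fun t =>
      Complex.exp_zero.trans (hu₂ ⟨hab.mem_right t, hbc.mem_left t⟩).symm, sub_self _⟩
  exact Complex.two_pi_I_ne_zero (hu.hasLogIncrement_eq hK₀ hK₁ hK₂ hab hac hbc hua hub)

end Plane

end Homotopy

theorem isPathConnected_inter_inter {S₀ S₁ S₂ : Set ℂ} [SimplyConnectedSpace S₀]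
    [SimplyConnectedSpace S₁] [SimplyConnectedSpace S₂] (h01 : IsPathConnected (S₀ ∩ S₁))
    (h02 : IsPathConnected (S₀ ∩ S₂)) (h12 : IsPathConnected (S₁ ∩ S₂))
    (hne : (S₀ ∩ S₁ ∩ S₂).Nonempty) : IsPathConnected (S₀ ∩ S₁ ∩ S₂) := by
  obtain ⟨x, ⟨hx₀, hx₁⟩, hx₂⟩ := hne
  refine ⟨x, ⟨⟨hx₀, hx₁⟩, hx₂⟩, fun {y} ⟨⟨hy₀, hy₁⟩, hy₂⟩ => ?_⟩
  obtain ⟨a, ha⟩ := h01.joinedIn x ⟨hx₀, hx₁⟩ y ⟨hy₀, hy₁⟩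
  obtain ⟨b, hb⟩ := h02.joinedIn x ⟨hx₀, hx₂⟩ y ⟨hy₀, hy₂⟩
  obtain ⟨c, hc⟩ := h12.joinedIn x ⟨hx₁, hx₂⟩ y ⟨hy₁, hy₂⟩
  obtain ⟨K₀, hKS₀, hK₀, hfull₀, hulc₀, hab⟩ := (homotopicIn_of_simplyConnectedSpace
    (fun t => (ha t).1) fun t => (hb t).1).exists_isFull_subset
  obtain ⟨K₁, hKS₁, hK₁, hfull₁, hulc₁, hac⟩ := (homotopicIn_of_simplyConnectedSpace
    (fun t => (ha t).2) fun t => (hc t).1).exists_isFull_subset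
  obtain ⟨K₂, hKS₂, hK₂, hfull₂, hulc₂, hbc⟩ := (homotopicIn_of_simplyConnectedSpace
    (fun t => (hb t).2) fun t => (hc t).2).exists_isFull_subset
  have hK : ⋂ i, ![K₀, K₁, K₂] i = K₀ ∩ K₁ ∩ K₂ := by
    ext w
    simp [Fin.forall_fin_succ, and_assoc]
  have hjoined : JoinedIn (⋂ i, ![K₀, K₁, K₂] i) x y := by
    refine joinedIn_iInter (hK ▸ (hK₀.inter hK₁).inter hK₂) ?_ ?_
      (hK ▸ mem_connectedComponentIn_of_homotopicIn hK₀ hK₁ hK₂ hab hac hbc)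
    · simp [Fin.forall_fin_succ, hfull₀, hfull₁, hfull₂]
    · simp [Fin.forall_fin_succ, hulc₀, hulc₁, hulc₂]
  rw [hK] at hjoined
  exact hjoined.mono (inter_subset_inter (inter_subset_inter hKS₀ hKS₁) hKS₂)

theorem intersection_three_simply_connected_pathConnected_general {X : Type*} [TopologicalSpace X]
    {e : X → ℂ} (he : IsEmbedding e) {S₀ S₁ S₂ : Set X} (hs₀ : SimplyConnectedSpace S₀)
    (hs₁ : SimplyConnectedSpace S₁) (hs₂ : SimplyConnectedSpace S₂)
    (h01 : IsPathConnected (S₀ ∩ S₁)) (h02 : IsPathConnected (S₀ ∩ S₂))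
    (h12 : IsPathConnected (S₁ ∩ S₂)) (hne : (S₀ ∩ S₁ ∩ S₂).Nonempty) :
    IsPathConnected (S₀ ∩ S₁ ∩ S₂) := by
  have himage (S : Set X) (hS : SimplyConnectedSpace S) : SimplyConnectedSpace (e '' S) :=
    (he.homeomorphImage S).symm.toHomotopyEquiv.simplyConnectedSpace
  have := himage S₀ hs₀
  have := himage S₁ hs₁
  have := himage S₂ hs₂
  simp only [he.isInducing.isPathConnected_iff, image_inter he.injective] at h01 h02 h12 ⊢
  refine isPathConnected_inter_inter h01 h02 h12 ?_
  simpa only [← image_inter he.injective] using hne.image e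

/-- If `S₀, S₁, S₂` are simply connected compact subsets of the plane `ℝ²` such that
the intersection of any two of them is path connected and `S₀ ∩ S₁ ∩ S₂ ≠ ∅`,
then `S₀ ∩ S₁ ∩ S₂` is path connected. -/
theorem intersection_three_simply_connected_pathConnected
    (S₀ S₁ S₂ : Set (EuclideanSpace ℝ (Fin 2)))
    (hc₀ : IsCompact S₀) (hc₁ : IsCompact S₁) (hc₂ : IsCompact S₂)
    (hs₀ : SimplyConnectedSpace S₀) (hs₁ : SimplyConnectedSpace S₁)
    (hs₂ : SimplyConnectedSpace S₂)
    (h01 : IsPathConnected (S₀ ∩ S₁)) (h02 : IsPathConnected (S₀ ∩ S₂))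
    (h12 : IsPathConnected (S₁ ∩ S₂))
    (hne : (S₀ ∩ S₁ ∩ S₂).Nonempty) :
    IsPathConnected (S₀ ∩ S₁ ∩ S₂) := by
  exact intersection_three_simply_connected_pathConnected_general
    Complex.orthonormalBasisOneI.repr.symm.toHomeomorph.isEmbedding hs₀ hs₁ hs₂ h01 h02 h12 hne
end

section
/- Let {Sᵢ}_{i ∈ I} be an arbitrary nonempty family of simply connected subsets of the plane ℝ², and let x be a point of the intersection ⋂_{i ∈ I} Sᵢ. Then the fundamental group of ⋂_{i ∈ I} Sᵢ based at x is trivial; that is, every loop in ⋂_{i ∈ I} Sᵢ based at x is null-homotopic within ⋂_{i ∈ I} Sᵢ. -/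
/-! Let `X` be the image of a loop in `⋂ i, S i` with the bounded components of its complement
filled in. Then `X ⊆ S i` for all `i`: if `p ∈ X` were not in `S i`, then `z - p` would have a
continuous logarithm along the loop which, `S i` being simply connected, depends only on the point
of the image. Extend this logarithm to the plane by Tietze's theorem; its exponential on `X` and
`z - p` elsewhere form a nowhere vanishing function, whose logarithm is a continuous logarithm of
`z - p` on a large circle, which is absurd.

It remains to contract the loop inside `X`. Being a continuous image of an interval, the loop is
uniformly locally path connected, and filling in the holes preserves this. Hence a map of the square
into a small neighbourhood of `X` can be pushed into any smaller one by a small correction: on a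
fine grid, replace the vertices by nearby points of `X` and the edges by short paths in `X`, and
extend over each cell. The extension is composed of one to a disc and a map of the disc close to the
filled image of the boundary of the cell which is the identity on that image. The latter map exists
off a set of poles in the complement, and since the complement is connected, the poles can be moved
out of the disc. Infinitely many such corrections, with summable sizes, converge to a contraction
of the loop in `X`. -/

open Set Metric Topology Filter
open scoped unitInterval

namespace PlaneTopology

section FilledHull

variable {M : Type*} [TopologicalSpace M] [Bornology M] {Y Y' A : Set M} {z w : M}

/-- The set `Y` with its holes filled: all points except those of the unbounded components of `Yᶜ`.
The points of `Y` itself belong to it because their component in `Yᶜ` is empty by convention. -/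
def filledHull (Y : Set M) : Set M := {z | Bornology.IsBounded (connectedComponentIn Yᶜ z)}

lemma subset_filledHull : Y ⊆ filledHull Y := fun z hz => by
  simp [filledHull, connectedComponentIn_eq_empty (notMem_compl_iff.2 hz)]

lemma mem_filledHull_iff_of_isPreconnected (hA : IsPreconnected A) (hAY : A ⊆ Yᶜ) (hz : z ∈ A)
    (hw : w ∈ A) : z ∈ filledHull Y ↔ w ∈ filledHull Y := by
  rw [filledHull, mem_ofPred_eq, mem_ofPred_eq,
    connectedComponentIn_eq (hA.subset_connectedComponentIn hz hAY hw)]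

lemma mem_filledHull_iff_of_mem_connectedComponentIn (hw : w ∈ connectedComponentIn Yᶜ z) :
    z ∈ filledHull Y ↔ w ∈ filledHull Y := by
  rw [filledHull, mem_ofPred_eq, mem_ofPred_eq, connectedComponentIn_eq hw]

lemma mem_connectedComponentIn_of_notMem_filledHull (hz : z ∉ filledHull Y) :
    z ∈ connectedComponentIn Yᶜ z :=
  mem_connectedComponentIn fun hzY => hz (subset_filledHull hzY)

lemma filledHull_subset_filledHull (h : Y' ⊆ filledHull Y) : filledHull Y' ⊆ filledHull Y := by
  intro z hz
  by_contra hzY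
  refine hzY (hz.subset (isPreconnected_connectedComponentIn.subset_connectedComponentIn
    (mem_connectedComponentIn_of_notMem_filledHull hzY) fun w hw hwY' => hzY ?_))
  exact (mem_filledHull_iff_of_mem_connectedComponentIn hw).2 (h hwY')

variable [LocallyConnectedSpace M]

lemma isClosed_filledHull (hY : IsClosed Y) : IsClosed (filledHull Y) := by
  refine isOpen_compl_iff.1 (isOpen_iff_mem_nhds.2 fun z hz => ?_)
  filter_upwards [hY.isOpen_compl.connectedComponentIn.mem_nhds
    (mem_connectedComponentIn_of_notMem_filledHull hz)] with w hw
  exact fun h => hz ((mem_filledHull_iff_of_mem_connectedComponentIn hw).2 h)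

lemma frontier_filledHull_subset (hY : IsClosed Y) : frontier (filledHull Y) ⊆ Y := by
  intro z hz
  rw [(isClosed_filledHull hY).frontier_eq] at hz
  by_contra hzY
  refine hz.2 (mem_interior_iff_mem_nhds.2 ?_)
  filter_upwards [hY.isOpen_compl.connectedComponentIn.mem_nhds (mem_connectedComponentIn hzY)]
    with w hw using (mem_filledHull_iff_of_mem_connectedComponentIn hw).1 hz.1

end FilledHull

section NormedFilledHull

variable {E : Type*} [NormedAddCommGroup E] [NormedSpace ℝ E] {Y : Set E} {x y z c : E} {r ε : ℝ}

lemma filledHull_subset_closedBall (hr : 0 ≤ r) (h : Y ⊆ closedBall c r) :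
    filledHull Y ⊆ closedBall c r := by
  intro z hz
  by_contra hzr
  rw [mem_closedBall, dist_eq_norm, not_le] at hzr
  have hray : IsPreconnected ((fun t : ℝ => c + t • (z - c)) '' Ici 1) :=
    isPreconnected_Ici.image _ (by fun_prop)
  have hdisj : (fun t : ℝ => c + t • (z - c)) '' Ici 1 ⊆ Yᶜ := by
    rintro _ ⟨t, ht : 1 ≤ t, rfl⟩ hY
    have := h hY
    rw [mem_closedBall, dist_eq_norm, add_sub_cancel_left, norm_smul, Real.norm_of_nonneg] at this
    all_goals nlinarith
  obtain ⟨R, hR⟩ := (hz.subset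
    (hray.subset_connectedComponentIn ⟨1, by simp⟩ hdisj)).subset_closedBall c
  have hpos : 0 < ‖z - c‖ := hr.trans_lt hzr
  have hfar := hR ⟨max 1 (R / ‖z - c‖ + 1), mem_Ici.2 (le_max_left _ _), rfl⟩
  rw [mem_closedBall, dist_eq_norm, add_sub_cancel_left, norm_smul,
    Real.norm_of_nonneg (by positivity), ← le_div_iff₀ hpos] at hfar
  linarith [le_max_right 1 (R / ‖z - c‖ + 1)]

lemma isCompact_filledHull [ProperSpace E] (hY : IsCompact Y) : IsCompact (filledHull Y) := by
  obtain ⟨r, hr, hYr⟩ := hY.isBounded.subset_closedBall_lt 0 0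
  exact (isCompact_closedBall 0 r).of_isClosed_subset (isClosed_filledHull hY.isClosed)
    (filledHull_subset_closedBall hr.le hYr)

lemma isPreconnected_compl_closedBall (h : 1 < Module.rank ℝ E) (hr : 0 ≤ r) :
    IsPreconnected (closedBall c r)ᶜ := by
  have himage : (fun q : E × ℝ => c + q.2 • q.1) '' sphere 0 1 ×ˢ Ioi r = (closedBall c r)ᶜ := by
    ext z
    simp only [mem_compl_iff, mem_closedBall, dist_eq_norm, not_le]
    constructor
    · rintro ⟨⟨u, s⟩, ⟨hu, hs⟩, rfl⟩
      rw [mem_sphere_zero_iff_norm] at hu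
      rw [add_sub_cancel_left, norm_smul, hu, mul_one]
      exact lt_of_lt_of_le hs (le_abs_self s)
    · intro hz
      have hz0 : ‖z - c‖ ≠ 0 := (hr.trans_lt hz).ne'
      exact ⟨(‖z - c‖⁻¹ • (z - c), ‖z - c‖), ⟨by simp [norm_smul, hz0], hz⟩, by simp [hz0]⟩
  rw [← himage]
  exact ((isPreconnected_sphere h 0 1).prod isPreconnected_Ioi).image _ (by fun_prop)

lemma isPreconnected_compl_filledHull (h : 1 < Module.rank ℝ E) (hY : Bornology.IsBounded Y) :
    IsPreconnected (filledHull Y)ᶜ := by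
  obtain ⟨r, hr, hYr⟩ := hY.subset_closedBall_lt 0 0
  have hmeet : ∀ z ∈ (filledHull Y)ᶜ, ∃ w ∈ connectedComponentIn Yᶜ z, w ∉ closedBall 0 r :=
    fun z hz => not_subset.1 fun hsub => hz (isBounded_closedBall.subset hsub)
  rcases (filledHull Y)ᶜ.eq_empty_or_nonempty with hempty | ⟨z₀, hz₀⟩
  · exact hempty ▸ isPreconnected_empty
  obtain ⟨e, -, he⟩ := hmeet z₀ hz₀
  refine isPreconnected_of_forall e fun z hz => ?_
  obtain ⟨w, hwz, hw⟩ := hmeet z hz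
  refine ⟨connectedComponentIn Yᶜ z ∪ (closedBall 0 r)ᶜ, union_subset (fun a ha hah => hz ?_)
    (compl_subset_compl.2 (filledHull_subset_closedBall hr.le hYr)), Or.inr he,
    Or.inl (mem_connectedComponentIn_of_notMem_filledHull hz),
    isPreconnected_connectedComponentIn.union w hwz hw (isPreconnected_compl_closedBall h hr.le)⟩
  exact (mem_filledHull_iff_of_mem_connectedComponentIn ha).2 hah

lemma segment_subset_filledHull (hx : x ∈ filledHull Y) (h : Disjoint (segment ℝ x z) Y) :
    segment ℝ x z ⊆ filledHull Y := fun _ hw =>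
  (mem_filledHull_iff_of_isPreconnected (convex_segment x z).isPreconnected
    h.subset_compl_right (left_mem_segment ℝ x z) hw).1 hx

lemma exists_first_mem_segment (hY : IsClosed Y) (h : (segment ℝ x z ∩ Y).Nonempty) :
    ∃ y ∈ segment ℝ x z ∩ Y, segment ℝ x y ∩ Y ⊆ {y} := by
  have hcompact : IsCompact (segment ℝ x z ∩ Y) := by
    rw [segment_eq_image_lineMap]
    exact (isCompact_Icc.image AffineMap.lineMap_continuous).inter_right hY
  obtain ⟨y, hy, hmin⟩ := hcompact.exists_isMinOn h (f := dist x) (by fun_prop)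
  refine ⟨y, hy, fun w ⟨hwy, hwY⟩ => ?_⟩
  have hadd : dist x w + dist w y = dist x y := dist_add_dist_of_mem_segment hwy
  have hwz : w ∈ segment ℝ x z :=
    (convex_segment x z).segment_subset (left_mem_segment ℝ x z) hy.1 hwy
  have hle : dist x y ≤ dist x w := hmin ⟨hwz, hwY⟩
  exact dist_le_zero.1 (by linarith)

lemma exists_mem_segment_subset_filledHull (hY : IsClosed Y) (hx : x ∈ filledHull Y)
    (h : (segment ℝ x z ∩ Y).Nonempty) :
    ∃ y ∈ segment ℝ x z ∩ Y, segment ℝ x y ⊆ filledHull Y := by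
  obtain ⟨y, hy, hfirst⟩ := exists_first_mem_segment hY h
  refine ⟨y, hy, fun w hw => ?_⟩
  rcases eq_or_ne w y with rfl | hwy
  · exact subset_filledHull hy.2
  have hyw : y ∉ segment ℝ x w := fun hyw => hwy <| dist_le_zero.1 <| by
    linarith [dist_add_dist_of_mem_segment hyw, dist_add_dist_of_mem_segment hw, dist_comm w y,
      dist_nonneg (x := w) (y := y)]
  refine segment_subset_filledHull hx (disjoint_left.2 fun a ha haY => hyw ?_)
    (right_mem_segment ℝ x w)
  have hay : a ∈ segment ℝ x y :=
    (convex_segment x y).segment_subset (left_mem_segment ℝ x y) hw ha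
  exact hfirst ⟨hay, haY⟩ ▸ ha

lemma isPathConnected_filledHull [Nontrivial E] (hY : IsCompact Y) (hpath : IsPathConnected Y) :
    IsPathConnected (filledHull Y) := by
  obtain ⟨y₀, hy₀, hjoin⟩ := hpath
  refine ⟨y₀, subset_filledHull hy₀, fun {x} hx => ?_⟩
  obtain ⟨r, hr, hYr⟩ := hY.isBounded.subset_closedBall_lt 0 0
  obtain ⟨z, hz⟩ := NormedSpace.exists_lt_norm ℝ E r
  have hmeet : (segment ℝ x z ∩ Y).Nonempty := by
    rw [← not_disjoint_iff_nonempty_inter]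
    intro hdisj
    have hzhull := segment_subset_filledHull hx hdisj (right_mem_segment ℝ x z)
    exact hz.not_ge (mem_closedBall_zero_iff.1 (filledHull_subset_closedBall hr.le hYr hzhull))
  obtain ⟨y, hy, hxy⟩ := exists_mem_segment_subset_filledHull hY.isClosed hx hmeet
  exact ((hjoin hy.2).mono subset_filledHull).trans (JoinedIn.of_segment_subset hxy).symm

end NormedFilledHull

section UniformlyLocPathConnected

variable {M : Type*} [PseudoMetricSpace M] {X : Set M}

/-- Uniform local path connectedness: any two sufficiently close points of `X` are joined by a
path in `X` of small diameter, how close they must be depending only on that diameter. -/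
def IsUniformlyLocPathConnected (X : Set M) : Prop :=
  ∀ ε > 0, ∃ δ > 0, ∀ x ∈ X, ∀ y ∈ X, dist x y < δ → JoinedIn (X ∩ closedBall x ε) x y

lemma isUniformlyLocPathConnected_of_isCompact [LocallyPathConnectedSpace X] (hX : IsCompact X) :
    IsUniformlyLocPathConnected X := by
  intro ε hε
  have := isCompact_iff_compactSpace.1 hX
  obtain ⟨δ, hδ, hδX⟩ := lebesgue_number_lemma_of_metric (isCompact_univ (X := X))
    (c := fun c : X => pathComponentIn (ball c (ε / 2)) c) (fun c => isOpen_ball.pathComponentIn c)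
    (fun c _ => mem_iUnion.2 ⟨c, mem_pathComponentIn_self (mem_ball_self (half_pos hε))⟩)
  refine ⟨δ, hδ, fun x hx y hy hxy => ?_⟩
  obtain ⟨c, hc⟩ := hδX ⟨x, hx⟩ (mem_univ _)
  have hcx : JoinedIn (ball c (ε / 2)) c ⟨x, hx⟩ := hc (mem_ball_self hδ)
  have hcy : JoinedIn (ball c (ε / 2)) c ⟨y, hy⟩ := hc (mem_ball'.2 hxy)
  refine ((hcx.symm.trans hcy).map continuous_subtype_val).mono ?_
  rintro _ ⟨w, hw, rfl⟩
  refine ⟨w.2, mem_closedBall.2 ?_⟩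
  have hxc : dist x c < ε / 2 := hcx.target_mem
  have hwc : dist (w : M) c < ε / 2 := hw
  linarith [dist_triangle_right (w : M) x c]

lemma isUniformlyLocPathConnected_range {A : Type*} [TopologicalSpace A] [CompactSpace A]
    [LocallyPathConnectedSpace A] {N : Type*} [MetricSpace N] {f : A → N} (hf : Continuous f) :
    IsUniformlyLocPathConnected (range f) := by
  have hquot : IsQuotientMap (rangeFactorization f) :=
    .of_surjective_continuous rangeFactorization_surjective hf.rangeFactorization
  have := hquot.locallyPathConnectedSpace
  exact isUniformlyLocPathConnected_of_isCompact (isCompact_range hf)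

lemma isUniformlyLocPathConnected_filledHull {E : Type*} [NormedAddCommGroup E] [NormedSpace ℝ E]
    {Y : Set E} (hY : IsClosed Y) (hulpc : IsUniformlyLocPathConnected Y) :
    IsUniformlyLocPathConnected (filledHull Y) := by
  intro ε hε
  obtain ⟨δ, hδ, hjoin⟩ := hulpc (ε / 2) (half_pos hε)
  refine ⟨min δ (ε / 2), by positivity, fun x hx x' hx' hxx' => ?_⟩
  have hseg : segment ℝ x x' ⊆ closedBall x (ε / 2) :=
    (convex_closedBall x (ε / 2)).segment_subset (mem_closedBall_self (by positivity))
      (mem_closedBall'.2 (hxx'.trans_le (min_le_right _ _)).le)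
  have hball : closedBall x (ε / 2) ⊆ closedBall x ε := closedBall_subset_closedBall (by linarith)
  by_cases hmeet : (segment ℝ x x' ∩ Y).Nonempty
  · obtain ⟨y, ⟨hy, hyY⟩, hxy⟩ := exists_mem_segment_subset_filledHull hY hx hmeet
    obtain ⟨y', ⟨hy', hyY'⟩, hxy'⟩ :=
      exists_mem_segment_subset_filledHull hY hx' (segment_symm ℝ x x' ▸ hmeet)
    rw [segment_symm] at hy'
    have hyy' : dist y y' ≤ dist x x' := by
      rw [← diam_pair (x := x) (y := x'), ← convexHull_diam, convexHull_pair]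
      exact dist_le_diam_of_mem (isBounded_closedBall.subset hseg) hy hy'
    have hjoin_y : JoinedIn (filledHull Y ∩ closedBall x ε) x y :=
      .of_segment_subset (subset_inter hxy (((convex_segment x x').segment_subset
        (left_mem_segment ℝ _ _) hy).trans (hseg.trans hball)))
    have hjoin_y' : JoinedIn (filledHull Y ∩ closedBall x ε) x' y' :=
      .of_segment_subset (subset_inter hxy' (((convex_segment x x').segment_subset
        (right_mem_segment ℝ _ _) hy').trans (hseg.trans hball)))
    have hjoin_yy' : JoinedIn (filledHull Y ∩ closedBall x ε) y y' := by
      refine (hjoin y hyY y' hyY' (hyy'.trans_lt (hxx'.trans_le (min_le_left _ _)))).mono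
        (inter_subset_inter subset_filledHull (closedBall_subset_closedBall' ?_))
      linarith [mem_closedBall.1 (hseg hy)]
    exact hjoin_y.trans (hjoin_yy'.trans hjoin_y'.symm)
  · exact .of_segment_subset (subset_inter (segment_subset_filledHull hx
      (disjoint_iff_inter_eq_empty.2 (not_nonempty_iff_eq_empty.1 hmeet))) (hseg.trans hball))

lemma locallyPathConnectedSpace_unitInterval : LocallyPathConnectedSpace I :=
  (IsQuotientMap.of_inverse continuous_subtype_val continuous_projIcc
    (projIcc_val (zero_le_one (α := ℝ)))).locallyPathConnectedSpace

end UniformlyLocPathConnected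

section Logarithm

lemma homotopic_of_forall_loop_nullhomotopic {Z : Type*} [TopologicalSpace Z] {x y : Z}
    (hx : ∀ γ : Path x x, γ.Homotopic (.refl x)) (γ γ' : Path x y) : γ.Homotopic γ' := by
  have h : (Path.Homotopic.Quotient.mk (γ.trans γ'.symm)) = .refl x :=
    Path.Homotopic.Quotient.eq.2 (hx _)
  rw [← Path.Homotopic.Quotient.eq]
  calc Path.Homotopic.Quotient.mk γ
      = ((Path.Homotopic.Quotient.mk γ).trans (Path.Homotopic.Quotient.mk γ').symm).trans
          (Path.Homotopic.Quotient.mk γ') := by simp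
    _ = Path.Homotopic.Quotient.mk γ' := by
      rw [← Path.Homotopic.Quotient.mk_symm, ← Path.Homotopic.Quotient.mk_trans, h]; simp

lemma apply_eq_of_isCoveringMap_lift {B X Z : Type*} [TopologicalSpace B] [TopologicalSpace X]
    [TopologicalSpace Z] {p : B → X} (hp : IsCoveringMap p) {x : Z}
    (hx : ∀ γ : Path x x, γ.Homotopic (.refl x)) (q : C(Z, X)) (γ : Path x x) (θ : C(I, B))
    (hθ : ∀ t, p (θ t) = q (γ t)) {s t : I} (hst : γ s = γ t) : θ s = θ t := by
  have hlift : ∀ u : I, ∀ δ : C(I, X), (∀ v, δ v = q (γ (Icc.convexComb 0 u v))) →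
      ∀ h0, hp.liftPath δ (θ 0) h0 1 = θ u := fun u δ hδ h0 => by
    have : θ ∘ Icc.convexComb 0 u = hp.liftPath δ (θ 0) h0 :=
      (hp.eq_liftPath_iff h0).2 ⟨by fun_prop, funext fun v => by simp [hθ, hδ], by simp⟩
    simp [← this]
  let γs : Path x (γ t) := (γ.subpath 0 s).cast γ.source.symm hst.symm
  let γt : Path x (γ t) := (γ.subpath 0 t).cast γ.source.symm rfl
  have hhom : (γs.map q.continuous).Homotopic (γt.map q.continuous) :=
    (homotopic_of_forall_loop_nullhomotopic hx γs γt).map q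
  have h0 : ∀ δ : Path x (γ t), δ.map q.continuous 0 = p (θ 0) := fun δ => by simp [hθ]
  calc θ s = hp.liftPath (γs.map q.continuous) (θ 0) (h0 γs) 1 := (hlift s _ (fun _ => rfl) _).symm
    _ = hp.liftPath (γt.map q.continuous) (θ 0) (h0 γt) 1 :=
      hp.liftPath_apply_one_eq_of_homotopicRel hhom _ _ _
    _ = θ t := hlift t _ (fun _ => rfl) _

lemma exists_exp_eq {A : Type*} [TopologicalSpace A] [SimplyConnectedSpace A]
    [LocallyPathConnectedSpace A] (f : C(A, ℂ)) (hf : ∀ a, f a ≠ 0) :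
    ∃ L : C(A, ℂ), ∀ a, Complex.exp (L a) = f a := by
  obtain ⟨a⟩ : Nonempty A := inferInstance
  obtain ⟨L, ⟨-, hL⟩, -⟩ := Complex.isCoveringMapOn_exp.existsUnique_continuousMap_lifts f
    (Complex.exp_log (hf a)) fun b => hf b
  exact ⟨L, congrFun hL⟩

lemma not_forall_sphere_exp_eq_sub (L : C(ℂ, ℂ)) (p : ℂ) {r : ℝ} (hr : 0 < r) :
    ¬ ∀ z ∈ sphere p r, Complex.exp (L z) = z - p := by
  intro hL
  have hcircle : ∀ t, Complex.exp (L (circleMap p r t)) = circleMap 0 r t := fun t => by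
    rw [hL _ (circleMap_mem_sphere p hr.le t), circleMap_sub_center]
  have hunique : (fun t : ℝ => L (circleMap p r t)) =
      fun t : ℝ => L (circleMap p r 0) + t * Complex.I := by
    refine Complex.isCoveringMap_exp.eq_of_comp_eq (by fun_prop) (by fun_prop) ?_ 0 (by simp)
    ext t
    simp only [Function.comp_apply, Complex.exp_add, hcircle]
    simp [circleMap]
  have hperiod := congrFun hunique (2 * Real.pi)
  rw [← zero_add (2 * Real.pi), periodic_circleMap p r 0, zero_add] at hperiod
  simp [Real.pi_ne_zero] at hperiod

lemma notMem_filledHull_of_exp_eq_sub {Y : Set ℂ} (hY : IsCompact Y) {p : ℂ} (F : C(ℂ, ℂ))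
    (hF : ∀ y ∈ Y, Complex.exp (F y) = y - p) : p ∉ filledHull Y := by
  intro hp
  classical
  let g : C(ℂ, ℂ) :=
    { toFun := (filledHull Y).piecewise (fun z => Complex.exp (F z)) (fun z => z - p)
      continuous_toFun := Continuous.piecewise
        (fun y hy => hF y (frontier_filledHull_subset hY.isClosed hy)) (by fun_prop) (by fun_prop) }
  have hg : ∀ z, g z ≠ 0 := fun z => by
    by_cases hz : z ∈ filledHull Y
    · simp [g, hz]
    · simpa [g, hz, sub_eq_zero] using fun h : z = p => hz (h ▸ hp)
  obtain ⟨L, hL⟩ := exists_exp_eq g hg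
  obtain ⟨r, hr, hYr⟩ := hY.isBounded.subset_closedBall_lt 0 p
  refine not_forall_sphere_exp_eq_sub L p (r := r + 1) (by linarith) fun z hz => ?_
  have hzY : z ∉ filledHull Y := fun h => by
    linarith [mem_sphere.1 hz, mem_closedBall.1 (filledHull_subset_closedBall hr.le hYr h)]
  simp [hL, g, hzY]

lemma filledHull_range_subset_range {Z : Type*} [TopologicalSpace Z] {x : Z}
    (hx : ∀ γ : Path x x, γ.Homotopic (.refl x)) {j : Z → ℂ} (hj : Continuous j)
    (hinj : Function.Injective j) (γ : Path x x) :
    filledHull (range fun t => j (γ t)) ⊆ range j := by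
  intro p hp
  by_contra hpj
  let q : C(Z, {w : ℂ // w ≠ 0}) :=
    ⟨fun z => ⟨j z - p, sub_ne_zero.2 fun h => hpj ⟨z, h⟩⟩, by fun_prop⟩
  have hexp := Complex.isCoveringMap_exp
  have hstart : q.comp (γ : C(I, Z)) 0 = ⟨_, (Complex.log (j x - p)).exp_ne_zero⟩ :=
    Subtype.ext (by simpa [q] using (Complex.exp_log (q x).2).symm)
  let θ : C(I, ℂ) := hexp.liftPath (q.comp (γ : C(I, Z))) (Complex.log (j x - p)) hstart
  have hθ := congrFun (hexp.liftPath_lifts (q.comp (γ : C(I, Z))) _ hstart)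
  have hc : Continuous fun t => j (γ t) := by fun_prop
  have hquot : IsQuotientMap (rangeFactorization fun t => j (γ t)) :=
    .of_surjective_continuous rangeFactorization_surjective hc.rangeFactorization
  have hfactor : ∀ s t, rangeFactorization (fun t => j (γ t)) s =
      rangeFactorization (fun t => j (γ t)) t → θ s = θ t := fun s t hst =>
    apply_eq_of_isCoveringMap_lift hexp hx q γ θ hθ (hinj (congrArg Subtype.val hst))
  let f := hquot.lift (f := ⟨_, hquot.continuous⟩) θ hfactor
  have hcompact := isCompact_range hc
  obtain ⟨F, hF⟩ := ContinuousMap.exists_restrict_eq hcompact.isClosed f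
  refine notMem_filledHull_of_exp_eq_sub hcompact F ?_ hp
  rintro _ ⟨t, rfl⟩
  have hFθ : F (j (γ t)) = θ t := (DFunLike.congr_fun hF ⟨_, mem_range_self t⟩).trans
    (DFunLike.congr_fun (hquot.lift_comp (f := ⟨_, hquot.continuous⟩) θ hfactor) t)
  rw [hFθ]
  exact congrArg Subtype.val (hθ t)

end Logarithm

section Gluing

variable {A Y ι : Type*} [TopologicalSpace A] [TopologicalSpace Y]

lemma exists_continuousOn_eqOn_of_locallyFinite {C : ι → Set A} (hlf : LocallyFinite C)
    (hC : ∀ i, IsClosed (C i)) (hcover : ⋃ i, C i = univ) {U : Set A} {g : ι → A → Y}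
    (hg : ∀ i, ContinuousOn (g i) (C i ∩ U)) (hagree : ∀ i j, EqOn (g i) (g j) (C i ∩ C j)) :
    ∃ F : A → Y, ContinuousOn F U ∧ ∀ i, EqOn F (g i) (C i) := by
  have hmem : ∀ z, ∃ i, z ∈ C i := iUnion_eq_univ_iff.1 hcover
  choose k hk using hmem
  have hF : ∀ i, EqOn (fun z => g (k z) z) (g i) (C i) := fun i z hz => hagree _ i ⟨hk z, hz⟩
  refine ⟨fun z => g (k z) z, fun z hz => ?_, hF⟩
  rw [ContinuousWithinAt, ← univ_inter U, ← hcover, iUnion_inter,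
    (hlf.subset fun i => inter_subset_left).nhdsWithin_iUnion, tendsto_iSup]
  intro i
  by_cases hzi : z ∈ C i
  · exact ((hg i).congr fun w hw => hF i hw.1) z ⟨hzi, hz⟩
  · have hbot : 𝓝[C i ∩ U] z = ⊥ := notMem_closure_iff_nhdsWithin_eq_bot.1 fun hcl =>
      hzi ((hC i).closure_subset_iff.2 inter_subset_left hcl)
    simp only [hbot, tendsto_bot]

lemma locallyFinite_closedBall_of_tendsto_cobounded {M : Type*} [PseudoMetricSpace M] {c : ι → M}
    (hc : Tendsto c cofinite (Bornology.cobounded M)) (r : ℝ) :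
    LocallyFinite fun i => closedBall (c i) r := by
  refine fun z => ⟨ball z 1, ball_mem_nhds z one_pos, ?_⟩
  have hball : (closedBall z (1 + r))ᶜ ∈ Bornology.cobounded M :=
    Bornology.isBounded_def.1 isBounded_closedBall
  refine Set.Finite.subset (mem_cofinite.1 (hc hball)) fun i ⟨w, hwi, hwz⟩ => ?_
  rw [mem_compl_iff, mem_preimage, notMem_compl_iff, mem_closedBall']
  linarith [dist_triangle_left z (c i) w, mem_ball.1 hwz, mem_closedBall.1 hwi]

lemma exists_continuous_interpolation {f : ℝ → Y} (hf : Continuous f) {X : Set Y} {φ : ℤ → Y}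
    (hφ : ∀ i : ℤ, f i ∈ X → φ i = f i) {C : ℤ → Set Y}
    (hC : ∀ i, JoinedIn (C i) (φ i) (φ (i + 1))) :
    ∃ H : ℝ → Y, Continuous H ∧ (∀ i : ℤ, H i = φ i) ∧
      ∀ i : ℤ, (MapsTo f (Icc i (i + 1)) X → EqOn H f (Icc i (i + 1))) ∧
        (¬ MapsTo f (Icc i (i + 1)) X → MapsTo H (Icc i (i + 1)) (C i)) := by
  classical
  have hpiece : ∀ i : ℤ, ∃ k : ℝ → Y, Continuous k ∧ k i = φ i ∧ k (i + 1) = φ (i + 1) ∧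
      (MapsTo f (Icc i (i + 1)) X → k = f) ∧
        (¬ MapsTo f (Icc i (i + 1)) X → ∀ x, k x ∈ C i) := by
    intro i
    by_cases hX : MapsTo f (Icc (i : ℝ) (i + 1)) X
    · have hend : f (i + 1) ∈ X := hX (right_mem_Icc.2 (by linarith))
      refine ⟨f, hf, (hφ i (hX (left_mem_Icc.2 (by linarith)))).symm, ?_, fun _ => rfl,
        fun h => absurd hX h⟩
      simpa using (hφ (i + 1) (by simpa using hend)).symm
    · obtain ⟨p, hp⟩ := hC i
      refine ⟨fun x => p.extend (x - i), by fun_prop, by simp, by simp, fun h => absurd h hX,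
        fun _ x => ?_⟩
      obtain ⟨t, ht⟩ : p.extend (x - i) ∈ range p := p.extend_range ▸ mem_range_self _
      simpa only [← ht] using hp t
  choose k hk hk_left hk_right hkX hkC using hpiece
  have hagree : ∀ i j : ℤ, i < j →
      EqOn (k i) (k j) (Icc (i : ℝ) (i + 1) ∩ Icc (j : ℝ) (j + 1)) := by
    rintro i j hij x ⟨⟨-, hxi⟩, hjx, -⟩
    have hij' : (i : ℝ) + 1 ≤ j := mod_cast hij
    obtain rfl : j = i + 1 := by exact_mod_cast le_antisymm (hjx.trans hxi) hij'
    obtain rfl : x = i + 1 := by push_cast at hjx; exact le_antisymm hxi hjx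
    have := hk_left (i + 1)
    push_cast at this
    rw [hk_right, this]
  have hlf : LocallyFinite fun i : ℤ => Icc (i : ℝ) (i + 1) :=
    (locallyFinite_closedBall_of_tendsto_cobounded
      (Metric.cobounded_eq_cocompact (α := ℝ) ▸ Int.tendsto_coe_cofinite) 1).subset
      fun i => Real.closedBall_eq_Icc ▸ Icc_subset_Icc_left (by linarith)
  obtain ⟨H, hH, hHk⟩ := exists_continuousOn_eqOn_of_locallyFinite hlf (fun i => isClosed_Icc)
    (iUnion_Icc_intCast ℝ) (U := univ) (fun i => (hk i).continuousOn) fun i j => by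
      rcases lt_trichotomy i j with hij | rfl | hij
      · exact hagree i j hij
      · exact eqOn_refl _ _
      · exact inter_comm _ _ ▸ (hagree j i hij).symm
  refine ⟨H, continuousOn_univ.1 hH, fun i => ?_, fun i => ⟨fun hX => ?_, fun hX x hx => ?_⟩⟩
  · exact (hHk i (left_mem_Icc.2 (by linarith))).trans (hk_left i)
  · exact hkX i hX ▸ hHk i
  · exact hHk i hx ▸ hkC i hX x

end Gluing

section Grid

/-- The lower left corner of the grid square `gridCell p`. -/
def gridVertex (p : ℤ × ℤ) : ℝ × ℝ := (p.1, p.2)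

/-- The centre of the grid square `gridCell p`. -/
noncomputable def gridCenter (p : ℤ × ℤ) : ℝ × ℝ := (p.1 + 1 / 2, p.2 + 1 / 2)

/-- The closed unit square with lower left corner `p`, as a closed ball of the sup norm, so that
its boundary is the sphere of radius `1 / 2` about `gridCenter p`. -/
def gridCell (p : ℤ × ℤ) : Set (ℝ × ℝ) := closedBall (gridCenter p) (1 / 2)

/-- The bottom side and the left side of `gridCell p`; every edge of the unit grid belongs to
exactly one `gridEdges p`. -/
def gridEdges (p : ℤ × ℤ) : Set (Set (ℝ × ℝ)) :=
  {Icc (p.1 : ℝ) (p.1 + 1) ×ˢ {(p.2 : ℝ)}, {(p.1 : ℝ)} ×ˢ Icc (p.2 : ℝ) (p.2 + 1)}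

lemma gridCell_eq_prod (p : ℤ × ℤ) :
    gridCell p = Icc (p.1 : ℝ) (p.1 + 1) ×ˢ Icc (p.2 : ℝ) (p.2 + 1) := by
  rw [gridCell, gridCenter, ← closedBall_prod_same, Real.closedBall_eq_Icc, Real.closedBall_eq_Icc]
  congr 2 <;> ring

lemma mem_gridCell_floor (z : ℝ × ℝ) : z ∈ gridCell (⌊z.1⌋, ⌊z.2⌋) := by
  rw [gridCell_eq_prod]
  exact ⟨⟨Int.floor_le _, (Int.lt_floor_add_one _).le⟩, Int.floor_le _, (Int.lt_floor_add_one _).le⟩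

lemma gridVertex_mem_of_mem_gridEdges {p : ℤ × ℤ} {e : Set (ℝ × ℝ)} (he : e ∈ gridEdges p) :
    gridVertex p ∈ e := by
  rcases he with rfl | rfl <;> simp [gridVertex]

lemma sphere_gridCenter (p : ℤ × ℤ) : sphere (gridCenter p) (1 / 2) =
    {(p.1 : ℝ), (p.1 : ℝ) + 1} ×ˢ Icc (p.2 : ℝ) (p.2 + 1) ∪
      Icc (p.1 : ℝ) (p.1 + 1) ×ˢ {(p.2 : ℝ), (p.2 : ℝ) + 1} := by
  rw [sphere_prod, gridCenter, Real.sphere_eq_pair _ (by norm_num),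
    Real.sphere_eq_pair _ (by norm_num), Real.closedBall_eq_Icc, Real.closedBall_eq_Icc]
  simp only [add_sub_cancel_right, add_assoc, add_halves]

lemma subset_sphere_of_mem_gridEdges {p : ℤ × ℤ} {e : Set (ℝ × ℝ)} (he : e ∈ gridEdges p) :
    e ⊆ sphere (gridCenter p) (1 / 2) := by
  rw [sphere_gridCenter]
  rcases he with rfl | rfl
  · exact subset_union_of_subset_right (prod_mono_right (by simp)) _
  · exact subset_union_of_subset_left (prod_mono_left (by simp)) _

lemma exists_mem_gridEdges_of_mem_sphere {p : ℤ × ℤ} {z : ℝ × ℝ}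
    (hz : z ∈ sphere (gridCenter p) (1 / 2)) : ∃ q, ∃ e ∈ gridEdges q, z ∈ e ∧ e ⊆ gridCell p := by
  rw [sphere_gridCenter] at hz
  rw [gridCell_eq_prod]
  rcases hz with ⟨hz₁ | hz₁, hz₂⟩ | ⟨hz₁, hz₂ | hz₂⟩
  · exact ⟨p, _, Or.inr rfl, ⟨hz₁, hz₂⟩, prod_mono_left (by simp)⟩
  · exact ⟨(p.1 + 1, p.2), _, Or.inr rfl, ⟨mod_cast hz₁, hz₂⟩, prod_mono_left (by simp)⟩
  · exact ⟨p, _, Or.inl rfl, ⟨hz₁, hz₂⟩, prod_mono_right (by simp)⟩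
  · exact ⟨(p.1, p.2 + 1), _, Or.inl rfl, ⟨hz₁, mod_cast hz₂⟩, prod_mono_right (by simp)⟩

lemma isometry_gridCenter : Isometry gridCenter := by
  have hcoord : Isometry fun n : ℤ => (n : ℝ) + 1 / 2 :=
    .of_dist_eq fun m n => by rw [dist_add_right, Int.dist_cast_real]
  exact hcoord.prodMap hcoord

lemma tendsto_gridCenter_cofinite_cobounded :
    Tendsto gridCenter cofinite (Bornology.cobounded (ℝ × ℝ)) := by
  rw [← cocompact_eq_cofinite, ← Metric.cobounded_eq_cocompact]
  exact isometry_gridCenter.antilipschitz.tendsto_cobounded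

lemma gridCell_inter_subset_sphere {p q : ℤ × ℤ} (hpq : p ≠ q) :
    gridCell p ∩ gridCell q ⊆ sphere (gridCenter p) (1 / 2) := by
  rintro z ⟨hzp, hzq⟩
  have hdist : 1 ≤ dist (gridCenter p) (gridCenter q) := by
    rw [isometry_gridCenter.dist_eq, Prod.dist_eq, le_max_iff]
    rcases not_and_or.1 (mt Prod.ext_iff.2 hpq) with h | h
    · exact Or.inl (Int.pairwise_one_le_dist h)
    · exact Or.inr (Int.pairwise_one_le_dist h)
  rw [gridCell, mem_closedBall] at hzp hzq
  rw [mem_sphere]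
  linarith [dist_triangle_left (gridCenter p) (gridCenter q) z]

lemma exists_continuousOn_eqOn_gridCell {Y : Type*} [TopologicalSpace Y] {U : Set (ℝ × ℝ)}
    {E : ℝ × ℝ → Y} {g : ℤ × ℤ → ℝ × ℝ → Y} (hg : ∀ p, ContinuousOn (g p) (gridCell p ∩ U))
    (hE : ∀ p, EqOn (g p) E (sphere (gridCenter p) (1 / 2))) :
    ∃ F : ℝ × ℝ → Y, ContinuousOn F U ∧ ∀ p, EqOn F (g p) (gridCell p) := by
  have hlf : LocallyFinite gridCell :=
    locallyFinite_closedBall_of_tendsto_cobounded tendsto_gridCenter_cofinite_cobounded _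
  refine exists_continuousOn_eqOn_of_locallyFinite hlf (fun p => isClosed_closedBall)
    (iUnion_eq_univ_iff.2 fun z => ⟨_, mem_gridCell_floor z⟩) hg fun p q z hz => ?_
  rcases eq_or_ne p q with rfl | hpq
  · rfl
  · rw [hE p (gridCell_inter_subset_sphere hpq hz),
      hE q (gridCell_inter_subset_sphere hpq.symm hz.symm)]

lemma exists_continuousOn_sphere_of_rows_columns {Y : Type*} [TopologicalSpace Y] {h v : ℤ → ℝ → Y}
    (hh : ∀ j, Continuous (h j)) (hv : ∀ i, Continuous (v i)) (hhv : ∀ i j : ℤ, h j i = v i j) :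
    ∃ E : ℝ × ℝ → Y, (∀ p, ContinuousOn E (sphere (gridCenter p) (1 / 2))) ∧
      (∀ (j : ℤ) x, E (x, j) = h j x) ∧ ∀ (i : ℤ) y, E (i, y) = v i y := by
  classical
  let E : ℝ × ℝ → Y := fun z => if z.2 = ⌊z.2⌋ then h ⌊z.2⌋ z.1 else v ⌊z.1⌋ z.2
  have hrow : ∀ (j : ℤ) x, E (x, j) = h j x := fun j x => by simp [E]
  have hcol : ∀ (i : ℤ) y, E (i, y) = v i y := by
    intro i y
    by_cases hy : y = ⌊y⌋
    · rw [hy, hrow, hhv]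
    · simp [E, hy]
  have hE_row : ∀ j : ℤ, ContinuousOn E (univ ×ˢ {(j : ℝ)}) := fun j =>
    ((hh j).comp continuous_fst).continuousOn.congr <| by
      rintro ⟨x, _⟩ ⟨-, rfl⟩
      exact hrow j x
  have hE_col : ∀ i : ℤ, ContinuousOn E ({(i : ℝ)} ×ˢ univ) := fun i =>
    ((hv i).comp continuous_snd).continuousOn.congr <| by
      rintro ⟨_, y⟩ ⟨rfl, -⟩
      exact hcol i y
  have hrow_closed : ∀ j : ℤ, IsClosed (univ ×ˢ {(j : ℝ)} : Set (ℝ × ℝ)) := fun j =>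
    isClosed_univ.prod isClosed_singleton
  have hcol_closed : ∀ i : ℤ, IsClosed ({(i : ℝ)} ×ˢ univ : Set (ℝ × ℝ)) := fun i =>
    isClosed_singleton.prod isClosed_univ
  refine ⟨E, fun p => ?_, hrow, hcol⟩
  have hrows := (hE_row p.2).union_of_isClosed (hE_row (p.2 + 1)) (hrow_closed _) (hrow_closed _)
  have hcols := (hE_col p.1).union_of_isClosed (hE_col (p.1 + 1)) (hcol_closed _) (hcol_closed _)
  refine (hcols.union_of_isClosed hrows ((hcol_closed _).union (hcol_closed _))
    ((hrow_closed _).union (hrow_closed _))).mono ?_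
  rw [sphere_gridCenter, ← union_prod, ← prod_union, singleton_union, singleton_union]
  push_cast
  exact union_subset_union (prod_mono_right (subset_univ _)) (prod_mono_left (subset_univ _))

lemma exists_continuousOn_gridEdges {Y : Type*} [TopologicalSpace Y] {f : ℝ × ℝ → Y}
    (hf : Continuous f) {X : Set Y} {φ : ℤ × ℤ → Y}
    (hφ : ∀ p, f (gridVertex p) ∈ X → φ p = f (gridVertex p)) {C : ℤ × ℤ → Set Y}
    (hright : ∀ p, JoinedIn (C p) (φ p) (φ (p.1 + 1, p.2)))
    (hup : ∀ p, JoinedIn (C p) (φ p) (φ (p.1, p.2 + 1))) :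
    ∃ E : ℝ × ℝ → Y, (∀ p, ContinuousOn E (sphere (gridCenter p) (1 / 2))) ∧
      ∀ p, ∀ e ∈ gridEdges p,
        (MapsTo f e X → EqOn E f e) ∧ (¬ MapsTo f e X → MapsTo E e (C p)) := by
  have hrow : ∀ j : ℤ, _ := fun j => exists_continuous_interpolation (f := fun x => f (x, j))
    (by fun_prop) (fun i => hφ (i, j)) fun i => hright (i, j)
  have hcol : ∀ i : ℤ, _ := fun i => exists_continuous_interpolation (f := fun y => f (i, y))
    (by fun_prop) (fun j => hφ (i, j)) fun j => hup (i, j)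
  choose h hh hhφ hhC using hrow
  choose v hv hvφ hvC using hcol
  obtain ⟨E, hE, hEh, hEv⟩ := exists_continuousOn_sphere_of_rows_columns hh hv fun i j =>
    (hhφ j i).trans (hvφ i j).symm
  refine ⟨E, hE, ?_⟩
  rintro ⟨i, j⟩ e (rfl | rfl)
  · simp only [EqOn, MapsTo, prod_singleton, forall_mem_image, hEh]
    exact hhC j i
  · simp only [EqOn, MapsTo, singleton_prod, forall_mem_image, hEv]
    exact hvC i j

end Grid

section RadialProjection

variable {E : Type*} [NormedAddCommGroup E] [NormedSpace ℝ E] {c z : E} {r : ℝ}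

/-- The radial projection from `c` onto the sphere of radius `r`; its value at `c` is junk. -/
noncomputable def radialProj (c : E) (r : ℝ) (z : E) : E := c + (r / ‖z - c‖) • (z - c)

lemma continuousOn_radialProj (c : E) (r : ℝ) : ContinuousOn (radialProj c r) {c}ᶜ := by
  refine continuousOn_const.add (ContinuousOn.smul ?_ (by fun_prop))
  exact continuousOn_const.div (by fun_prop) fun z hz => norm_ne_zero_iff.2 (sub_ne_zero.2 hz)

lemma radialProj_mem_sphere (hr : 0 ≤ r) (hz : z ≠ c) : radialProj c r z ∈ sphere c r := by
  rw [mem_sphere_iff_norm, radialProj, add_sub_cancel_left, norm_smul, norm_div, norm_norm,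
    Real.norm_of_nonneg hr, div_mul_cancel₀ _ (norm_ne_zero_iff.2 (sub_ne_zero.2 hz))]

lemma radialProj_of_mem_sphere (hr : r ≠ 0) (hz : z ∈ sphere c r) : radialProj c r z = z := by
  rw [radialProj, mem_sphere_iff_norm.1 hz, div_self hr, one_smul, add_sub_cancel]

end RadialProjection

section Poles

lemma exists_continuousOn_sphere_mapsTo {Y : Type*} [TopologicalSpace Y] {f : ℝ × ℝ → Y}
    (hf : Continuous f) {T : Set Y} (hT : IsPathConnected T) :
    ∃ E : ℝ × ℝ → Y, (∀ p, ContinuousOn E (sphere (gridCenter p) (1 / 2))) ∧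
      (∀ p, MapsTo E (sphere (gridCenter p) (1 / 2)) T) ∧
      ∀ p, MapsTo f (gridCell p) T → EqOn E f (sphere (gridCenter p) (1 / 2)) := by
  classical
  obtain ⟨t, ht⟩ := hT.nonempty
  have hjoin : ∀ p q, JoinedIn T (if f (gridVertex p) ∈ T then f (gridVertex p) else t)
      (if f (gridVertex q) ∈ T then f (gridVertex q) else t) := fun p q =>
    hT.joinedIn _ (by split_ifs <;> assumption) _ (by split_ifs <;> assumption)
  obtain ⟨E, hE, hEf⟩ := exists_continuousOn_gridEdges hf (fun p hp => if_pos hp)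
    (fun p => hjoin p _) (fun p => hjoin p _)
  refine ⟨E, hE, fun p z hz => ?_, fun p hp z hz => ?_⟩ <;>
    obtain ⟨q, e, he, hze, hep⟩ := exists_mem_gridEdges_of_mem_sphere hz
  · by_cases hfe : MapsTo f e T
    · exact (hEf q e he).1 hfe hze ▸ hfe hze
    · exact (hEf q e he).2 hfe hze
  · exact (hEf q e he).1 (hp.mono_left hep) hze

lemma exists_continuousOn_compl_gridCenter {Y : Type*} [TopologicalSpace Y] {f : ℝ × ℝ → Y}
    (hf : Continuous f) {T : Set Y} (hT : IsPathConnected T) :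
    ∃ F : ℝ × ℝ → Y, ContinuousOn F (gridCenter '' {p | ¬ MapsTo f (gridCell p) T})ᶜ ∧
      MapsTo F (gridCenter '' {p | ¬ MapsTo f (gridCell p) T})ᶜ T ∧
      ∀ p, MapsTo f (gridCell p) T → EqOn F f (gridCell p) := by
  classical
  set P := gridCenter '' {p | ¬ MapsTo f (gridCell p) T}
  obtain ⟨E, hE, hET, hEf⟩ := exists_continuousOn_sphere_mapsTo hf hT
  have hproj : ∀ p, ¬ MapsTo f (gridCell p) T → ∀ z ∈ Pᶜ, z ≠ gridCenter p ∧
      radialProj (gridCenter p) (1 / 2) z ∈ sphere (gridCenter p) (1 / 2) := fun p hp z hz =>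
    have hne : z ≠ gridCenter p := fun h => hz ⟨p, hp, h.symm⟩
    ⟨hne, radialProj_mem_sphere (by norm_num) hne⟩
  let g : ℤ × ℤ → ℝ × ℝ → Y := fun p =>
    if MapsTo f (gridCell p) T then f else fun z => E (radialProj (gridCenter p) (1 / 2) z)
  have hg : ∀ p, ContinuousOn (g p) (gridCell p ∩ Pᶜ) := by
    intro p
    by_cases hp : MapsTo f (gridCell p) T
    · simpa only [g, if_pos hp] using hf.continuousOn
    · simp only [g, if_neg hp]
      exact (hE p).comp ((continuousOn_radialProj _ _).mono fun z hz => (hproj p hp z hz.2).1)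
        fun z hz => (hproj p hp z hz.2).2
  have hgE : ∀ p, EqOn (g p) E (sphere (gridCenter p) (1 / 2)) := by
    intro p z hz
    by_cases hp : MapsTo f (gridCell p) T
    · simpa only [g, if_pos hp] using (hEf p hp hz).symm
    · simp only [g, if_neg hp, radialProj_of_mem_sphere one_half_pos.ne' hz]
  obtain ⟨F, hF, hFg⟩ := exists_continuousOn_eqOn_gridCell hg hgE
  refine ⟨F, hF, fun z hz => ?_, fun p hp => by simpa only [g, if_pos hp] using hFg p⟩
  rw [hFg _ (mem_gridCell_floor z)]
  by_cases hp : MapsTo f (gridCell (⌊z.1⌋, ⌊z.2⌋)) T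
  · simpa only [g, if_pos hp] using hp (mem_gridCell_floor z)
  · simpa only [g, if_neg hp] using hET _ (hproj _ hp z hz).2

variable {E : Type*} [NormedAddCommGroup E] [NormedSpace ℝ E] {X T P : Set E} {p q : E}

/-- The identity of `X` extends to a continuous map into `T` that is defined off the set `P` of
poles. -/
def HasExtensionOff (X T P : Set E) : Prop :=
  ∃ f : E → E, ContinuousOn f Pᶜ ∧ MapsTo f Pᶜ T ∧ EqOn f id (X \ P)

lemma exists_continuousLinearEquiv_dist_lt (L : (ℝ × ℝ) ≃L[ℝ] E) {η : ℝ} (hη : 0 < η) :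
    ∃ e : (ℝ × ℝ) ≃L[ℝ] E, ∀ p, ∀ z ∈ gridCell p, ∀ w ∈ gridCell p, dist (e z) (e w) < η := by
  set s : ℝ := η / (‖(L : (ℝ × ℝ) →L[ℝ] E)‖ + 1)
  have hs : 0 < s := by positivity
  refine ⟨L.trans (.smulLeft (Units.mk0 s hs.ne')), fun p z hz w hw => ?_⟩
  have hzw : dist z w ≤ 1 := by
    linarith [dist_triangle_right z w (gridCenter p), mem_closedBall.1 hz, mem_closedBall.1 hw]
  calc dist (s • L z) (s • L w) = s * ‖L (z - w)‖ := by
        rw [dist_smul₀, dist_eq_norm, Real.norm_of_nonneg hs.le, map_sub]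
    _ ≤ s * ‖(L : (ℝ × ℝ) →L[ℝ] E)‖ := by
        gcongr
        exact (L : (ℝ × ℝ) →L[ℝ] E).unit_le_opNorm _ (dist_eq_norm z w ▸ hzw)
    _ < s * (‖(L : (ℝ × ℝ) →L[ℝ] E)‖ + 1) := by gcongr; linarith
    _ = η := div_mul_cancel₀ _ (by positivity)

lemma exists_hasExtensionOff (L : (ℝ × ℝ) ≃L[ℝ] E) {η : ℝ} (hη : 0 < η)
    (hT : IsPathConnected T) (hXT : thickening η X ⊆ T) :
    ∃ P : Set E, Disjoint P X ∧ P.Countable ∧ (∀ R, (P ∩ closedBall 0 R).Finite) ∧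
      HasExtensionOff X T P := by
  obtain ⟨e, he⟩ := exists_continuousLinearEquiv_dist_lt L hη
  have hgood : ∀ p, ∀ z ∈ gridCell p, e z ∈ X → MapsTo e (gridCell p) T := fun p z hz hzX w hw =>
    hXT (mem_thickening_iff.2 ⟨e z, hzX, he p w hw z hz⟩)
  obtain ⟨F, hF, hFT, hFe⟩ := exists_continuousOn_compl_gridCenter e.continuous hT
  set B := {p | ¬ MapsTo e (gridCell p) T}
  have hP : ∀ w ∈ ((e ∘ gridCenter) '' B)ᶜ, e.symm w ∈ (gridCenter '' B)ᶜ := by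
    rintro w hw ⟨p, hp, hpw⟩
    exact hw ⟨p, hp, e.eq_symm_apply.1 hpw⟩
  refine ⟨(e ∘ gridCenter) '' B, disjoint_left.2 ?_, (to_countable B).image _, fun R => ?_,
    fun w => F (e.symm w), ?_, ?_, ?_⟩
  · rintro _ ⟨p, hp, rfl⟩ hpX
    exact hp (hgood p _ (mem_closedBall_self one_half_pos.le) hpX)
  · have htendsto := e.antilipschitz.tendsto_cobounded.comp tendsto_gridCenter_cofinite_cobounded
    have hfin := mem_cofinite.1 (htendsto (Bornology.isBounded_def.1 (isBounded_closedBall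
      (x := (0 : E)) (r := R))))
    refine (hfin.image (e ∘ gridCenter)).subset ?_
    rintro _ ⟨⟨p, -, rfl⟩, hpR⟩
    exact ⟨p, not_not_intro hpR, rfl⟩
  · exact hF.comp e.symm.continuous.continuousOn hP
  · exact fun w hw => hFT (hP w hw)
  · intro w hw
    have hcell := mem_gridCell_floor (e.symm w)
    change F (e.symm w) = w
    rw [hFe _ (hgood _ _ hcell (by simpa using hw.1)) hcell, e.apply_symm_apply]

lemma HasExtensionOff.move_of_disjoint_sphere {r : ℝ} (hX : Disjoint (closedBall q r) X)
    (hp : p ∈ ball q r) (hP : Disjoint (sphere q r) P) (h : HasExtensionOff X T (insert p P)) :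
    HasExtensionOff X T (insert q P) := by
  classical
  obtain ⟨f, hf, hfT, hfX⟩ := h
  have hr : 0 < r := pos_of_mem_ball hp
  have hsphere : sphere q r ⊆ (insert p P)ᶜ := by
    rintro z hz (rfl | hzP)
    · exact (mem_ball.1 hp).ne hz
    · exact disjoint_left.1 hP hz hzP
  have hinside : ∀ z ∈ (insert q P)ᶜ, radialProj q r z ∈ (insert p P)ᶜ := fun z hz =>
    hsphere (radialProj_mem_sphere hr.le fun h => hz (Or.inl h))
  have houtside : ∀ z ∈ (insert q P)ᶜ, z ∉ ball q r → z ∈ (insert p P)ᶜ := by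
    rintro z hz hzb (rfl | hzP)
    · exact hzb hp
    · exact hz (Or.inr hzP)
  refine ⟨(closedBall q r).piecewise (fun z => f (radialProj q r z)) f, ?_, fun z hz => ?_, ?_⟩
  · refine ContinuousOn.piecewise ?_ ?_ ?_
    · rintro z ⟨-, hz⟩
      rw [frontier_closedBall _ hr.ne'] at hz
      rw [radialProj_of_mem_sphere hr.ne' hz]
    · exact (hf.comp ((continuousOn_radialProj q r).mono (compl_subset_compl.2 (by simp)))
        hinside).mono inter_subset_left
    · refine hf.mono fun z hz => houtside z hz.1 ?_
      rw [closure_compl, interior_closedBall _ hr.ne'] at hz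
      exact hz.2
  · by_cases hzb : z ∈ closedBall q r
    · rw [piecewise_eq_of_mem _ _ _ hzb]
      exact hfT (hinside z hz)
    · rw [piecewise_eq_of_notMem _ _ _ hzb]
      exact hfT (houtside z hz fun h => hzb (ball_subset_closedBall h))
  · rintro z ⟨hzX, hz⟩
    have hzb : z ∉ closedBall q r := disjoint_right.1 hX hzX
    rw [piecewise_eq_of_notMem _ _ _ hzb]
    exact hfX ⟨hzX, houtside z hz fun h => hzb (ball_subset_closedBall h)⟩

lemma HasExtensionOff.move_in_ball {R : ℝ} (hX : Disjoint (ball q R) X) (hp : p ∈ ball q R)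
    (hP : P.Countable) (h : HasExtensionOff X T (insert p P)) :
    HasExtensionOff X T (insert q P) := by
  obtain ⟨r, hr, hpr, hrR⟩ := ((hP.image (dist · q)).dense_compl ℝ).exists_between hp
  exact h.move_of_disjoint_sphere (hX.mono_left (closedBall_subset_ball hrR)) hpr
    (disjoint_left.2 fun z hz hzP => hr ⟨z, hzP, hz⟩)

lemma HasExtensionOff.move (hX : IsClosed X) (hXc : IsPreconnected Xᶜ) (hp : p ∈ Xᶜ)
    (hq : q ∈ Xᶜ) (hP : P.Countable) (h : HasExtensionOff X T (insert p P)) :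
    HasExtensionOff X T (insert q P) := by
  refine hXc.induction₂' (fun p q => HasExtensionOff X T (insert p P) →
    HasExtensionOff X T (insert q P)) (fun x hx => ?_)
    (fun x y z _ _ _ hxy hyz => hyz ∘ hxy) hp hq h
  obtain ⟨R, hR, hball⟩ := Metric.isOpen_iff.1 hX.isOpen_compl x hx
  have hdisj : Disjoint (ball x R) X := disjoint_left.2 hball
  filter_upwards [mem_nhdsWithin_of_mem_nhds (ball_mem_nhds x (half_pos hR))] with y hy
  rw [mem_ball] at hy
  exact ⟨HasExtensionOff.move_in_ball (hdisj.mono_left (ball_subset_ball' (by linarith)))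
      (mem_ball'.2 hy) hP, HasExtensionOff.move_in_ball hdisj (mem_ball.2 (by linarith)) hP⟩

lemma HasExtensionOff.move_finite {A : Set E} (hX : IsClosed X) (hXc : IsPreconnected Xᶜ)
    (hq : q ∈ Xᶜ) (hA : A.Finite) (hAX : A ⊆ Xᶜ) (hP : P.Countable)
    (h : HasExtensionOff X T (A ∪ P)) : HasExtensionOff X T (insert q P) := by
  induction A, hA using Set.Finite.induction_on generalizing P with
  | empty =>
    obtain ⟨f, hf, hfT, hfX⟩ := h
    rw [empty_union] at hf hfT hfX
    have hsub := subset_insert q P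
    exact ⟨f, hf.mono (compl_subset_compl.2 hsub), hfT.mono_left (compl_subset_compl.2 hsub),
      hfX.mono (sdiff_subset_sdiff_right hsub)⟩
  | @insert a A _ hA ih =>
    rw [insert_union] at h
    have hmoved := h.move hX hXc (hAX (mem_insert _ _)) hq (hA.countable.union hP)
    rw [← union_insert] at hmoved
    simpa only [insert_idem] using ih ((subset_insert _ _).trans hAX) (hP.insert q) hmoved

end Poles

section Filling

lemma isPathConnected_thickening {E : Type*} [SeminormedAddCommGroup E] [NormedSpace ℝ E]
    {X : Set E} (hX : IsPathConnected X) {η : ℝ} (hη : 0 < η) :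
    IsPathConnected (thickening η X) := by
  obtain ⟨x, hx, hjoin⟩ := hX
  refine ⟨x, self_subset_thickening hη X hx, fun {y} hy => ?_⟩
  obtain ⟨z, hz, hyz⟩ := mem_thickening_iff.1 hy
  have hzy : JoinedIn (ball z η) z y :=
    .of_segment_subset ((convex_ball z η).segment_subset (mem_ball_self hη) hyz)
  exact ((hjoin hz).mono (self_subset_thickening hη X)).trans
    (hzy.mono (ball_subset_thickening hz η))

lemma exists_continuousOn_closedBall_mapsTo_thickening {Y : Set ℂ} (hY : IsCompact Y)
    (hpath : IsPathConnected Y) {η : ℝ} (hη : 0 < η) (R : ℝ) :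
    ∃ Φ : ℂ → ℂ, ContinuousOn Φ (closedBall 0 R) ∧
      MapsTo Φ (closedBall 0 R) (thickening η (filledHull Y)) ∧
      EqOn Φ id (filledHull Y ∩ closedBall 0 R) := by
  have hX := isPathConnected_filledHull hY hpath
  obtain ⟨P, hPX, hP, hPR, hPext⟩ := exists_hasExtensionOff Complex.equivRealProdCLM.symm hη
    (isPathConnected_thickening hX hη) Subset.rfl
  obtain ⟨r, hr⟩ := (isCompact_filledHull hY).isBounded.subset_closedBall 0
  obtain ⟨q, hq⟩ := NormedSpace.exists_lt_norm ℝ ℂ (max R r)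
  obtain ⟨hqR, hqr⟩ := max_lt_iff.1 hq
  have hqX : q ∈ (filledHull Y)ᶜ := fun h => hqr.not_ge (mem_closedBall_zero_iff.1 (hr h))
  obtain ⟨Φ, hΦ, hΦT, hΦX⟩ := HasExtensionOff.move_finite (P := P \ closedBall 0 R)
    (isClosed_filledHull hY.isClosed)
    (isPreconnected_compl_filledHull (by simp [Complex.rank_real_complex]) hY.isBounded) hqX
    (hPR R) (inter_subset_left.trans hPX.subset_compl_right) (hP.mono sdiff_subset)
    (by rwa [inter_union_sdiff])
  have hpole : closedBall 0 R ⊆ (insert q (P \ closedBall 0 R))ᶜ := by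
    rintro z hz (rfl | hzP)
    · exact hqR.not_ge (mem_closedBall_zero_iff.1 hz)
    · exact hzP.2 hz
  exact ⟨Φ, hΦ.mono hpole, hΦT.mono_left hpole, hΦX.mono (inter_subset_inter_right _ hpole)⟩

lemma exists_continuous_eqOn_mem_thickening_filledHull {Z : Type*} [TopologicalSpace Z] [T2Space Z]
    [NormalSpace Z] {D : Set Z} (hD : IsCompact D) (hpath : IsPathConnected D) {f : Z → ℂ}
    (hf : ContinuousOn f D) {η : ℝ} (hη : 0 < η) :
    ∃ F : Z → ℂ, Continuous F ∧ EqOn F f D ∧ ∀ z, F z ∈ thickening η (filledHull (f '' D)) := by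
  have hY := hD.image_of_continuousOn hf
  obtain ⟨R, hR, hYR⟩ := hY.isBounded.subset_closedBall_lt 0 0
  obtain ⟨Φ, hΦ, hΦT, hΦX⟩ :=
    exists_continuousOn_closedBall_mapsTo_thickening hY (hpath.image' hf) hη R
  have := Metric.instTietzeExtensionClosedBall ℝ (0 : ℂ) hR
  obtain ⟨g, hgR, hg⟩ := ContinuousMap.exists_forall_mem_restrict_eq hD.isClosed
    ⟨D.domRestrict f, hf.domRestrict⟩ (fun z => hYR (mem_image_of_mem f z.2))
  refine ⟨Φ ∘ g, hΦ.comp_continuous g.continuous hgR, fun z hz => ?_, fun z => hΦT (hgR z)⟩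
  have hgz : g z = f z := DFunLike.congr_fun hg ⟨z, hz⟩
  have hfz := mem_image_of_mem f hz
  rw [Function.comp_apply, hgz, hΦX ⟨subset_filledHull hfz, hYR hfz⟩, id]

end Filling

section Improvement

lemma exists_forall_mem_of_mem_thickening {A M : Type*} [PseudoMetricSpace M] {X : Set M} {δ : ℝ}
    {f : A → M} (hf : ∀ a, f a ∈ thickening δ X) :
    ∃ φ : A → M, (∀ a, φ a ∈ X) ∧ (∀ a, dist (f a) (φ a) < δ) ∧ ∀ a, f a ∈ X → φ a = f a := by
  have hnear : ∀ a, ∃ x ∈ X, dist (f a) x < δ ∧ (f a ∈ X → x = f a) := fun a => by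
    obtain ⟨x, hx, hfx⟩ := mem_thickening_iff.1 (hf a)
    by_cases ha : f a ∈ X
    · exact ⟨f a, ha, by rw [dist_self]; exact dist_nonneg.trans_lt hfx, fun _ => rfl⟩
    · exact ⟨x, hx, hfx, fun h => absurd h ha⟩
  choose φ hφX hfφ hφ using hnear
  exact ⟨φ, hφX, hfφ, hφ⟩

lemma IsUniformlyLocPathConnected.exists_skeleton {M : Type*} [PseudoMetricSpace M] {X : Set M}
    (hX : IsUniformlyLocPathConnected X) {ε : ℝ} (hε : 0 < ε) :
    ∃ δ > 0, ∀ f : ℝ × ℝ → M, Continuous f → (∀ z, f z ∈ thickening δ X) →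
      (∀ p, ∀ z ∈ gridCell p, ∀ w ∈ gridCell p, dist (f z) (f w) < δ) →
      ∃ E : ℝ × ℝ → M, (∀ p, ContinuousOn E (sphere (gridCenter p) (1 / 2))) ∧
        (∀ p, ∀ z ∈ sphere (gridCenter p) (1 / 2), E z ∈ X ∧ dist (E z) (f z) ≤ ε) ∧
        ∀ p, ∀ e ∈ gridEdges p, MapsTo f e X → EqOn E f e := by
  obtain ⟨δ, hδ, hjoin⟩ := hX (ε / 2) (half_pos hε)
  refine ⟨min (δ / 3) (ε / 4), by positivity, fun f hf hfX hosc => ?_⟩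
  have hδ' := min_le_left (δ / 3) (ε / 4)
  have hε' := min_le_right (δ / 3) (ε / 4)
  obtain ⟨φ, hφX, hfφ, hφ⟩ := exists_forall_mem_of_mem_thickening fun p => hfX (gridVertex p)
  have hadj : ∀ p q, gridVertex p ∈ gridCell p → gridVertex q ∈ gridCell p →
      JoinedIn (X ∩ closedBall (φ p) (ε / 2)) (φ p) (φ q) := fun p q hp hq =>
    hjoin _ (hφX p) _ (hφX q) (by
      linarith [dist_triangle4 (φ p) (f (gridVertex p)) (f (gridVertex q)) (φ q),
        dist_comm (φ p) (f (gridVertex p)), hfφ p, hosc p _ hp _ hq, hfφ q])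
  obtain ⟨E, hE, hEf⟩ := exists_continuousOn_gridEdges hf hφ
    (fun p => hadj p (p.1 + 1, p.2) (by simp [gridCell_eq_prod, gridVertex])
      (by simp [gridCell_eq_prod, gridVertex]))
    (fun p => hadj p (p.1, p.2 + 1) (by simp [gridCell_eq_prod, gridVertex])
      (by simp [gridCell_eq_prod, gridVertex]))
  refine ⟨E, hE, fun p z hz => ?_, fun p e he => (hEf p e he).1⟩
  obtain ⟨q, e, he, hze, -⟩ := exists_mem_gridEdges_of_mem_sphere hz
  by_cases hfe : MapsTo f e X
  · rw [(hEf q e he).1 hfe hze, dist_self]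
    exact ⟨hfe hze, hε.le⟩
  · have hcell : e ⊆ gridCell q :=
      (subset_sphere_of_mem_gridEdges he).trans sphere_subset_closedBall
    obtain ⟨hEX, hEφ⟩ := (hEf q e he).2 hfe hze
    refine ⟨hEX, ?_⟩
    linarith [dist_triangle4_right (E z) (f z) (φ q) (f (gridVertex q)), mem_closedBall.1 hEφ,
      hosc q z (hcell hze) _ (hcell (gridVertex_mem_of_mem_gridEdges he)), hfφ q,
      dist_comm (φ q) (f (gridVertex q))]

lemma exists_continuous_mem_thickening_dist_le {X : Set ℂ} (hulpc : IsUniformlyLocPathConnected X)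
    (hX : filledHull X ⊆ X) {ε : ℝ} (hε : 0 < ε) :
    ∃ δ > 0, ∀ f : ℝ × ℝ → ℂ, Continuous f → (∀ z, f z ∈ thickening δ X) →
      (∀ p, ∀ z ∈ gridCell p, ∀ w ∈ gridCell p, dist (f z) (f w) < δ) → ∀ η > 0,
      ∃ g : ℝ × ℝ → ℂ, Continuous g ∧ (∀ z, g z ∈ thickening η X) ∧ (∀ z, dist (g z) (f z) ≤ ε) ∧
        ∀ p, ∀ e ∈ gridEdges p, MapsTo f e X → EqOn g f e := by
  obtain ⟨δ₀, hδ₀, hskel⟩ := hulpc.exists_skeleton (ε := ε / 4) (by positivity)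
  refine ⟨min δ₀ (ε / 4), by positivity, fun f hf hfX hosc η hη => ?_⟩
  obtain ⟨E, hE, hEX, hEf⟩ := hskel f hf (fun z => thickening_mono (min_le_left _ _) X (hfX z))
    fun p z hz w hw => (hosc p z hz w hw).trans_le (min_le_left _ _)
  have hsphere : ∀ p, IsPathConnected (sphere (gridCenter p) (1 / 2)) := fun p =>
    isPathConnected_sphere (by rw [rank_prod', Module.rank_self]; norm_num) _ (by norm_num)
  choose G hG hGE hGX using fun p => exists_continuous_eqOn_mem_thickening_filledHull
    (isCompact_sphere _ _) (hsphere p) (hE p) (η := min η (ε / 4)) (by positivity)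
  obtain ⟨g, hg, hgG⟩ := exists_continuousOn_eqOn_gridCell (fun p => (hG p).continuousOn) hGE
    (U := univ)
  have himage : ∀ p, MapsTo E (sphere (gridCenter p) (1 / 2)) X := fun p z hz => (hEX p z hz).1
  refine ⟨g, continuousOn_univ.1 hg, fun z => ?_, fun z => ?_, fun p e he hfe z hz => ?_⟩
  · rw [hgG _ (mem_gridCell_floor z)]
    refine thickening_mono (min_le_left _ _) _ (thickening_subset_of_subset _ ?_ (hGX _ z))
    exact (filledHull_subset_filledHull ((himage _).image_subset.trans subset_filledHull)).trans hX
  · set p : ℤ × ℤ := (⌊z.1⌋, ⌊z.2⌋)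
    have hz : z ∈ gridCell p := mem_gridCell_floor z
    have hball : E '' sphere (gridCenter p) (1 / 2) ⊆ closedBall (f z) (ε / 2) := by
      rintro _ ⟨w, hw, rfl⟩
      have hfw := (hosc p w (sphere_subset_closedBall hw) z hz).trans_le (min_le_right _ _)
      rw [mem_closedBall]
      linarith [dist_triangle (E w) (f w) (f z), (hEX p w hw).2]
    obtain ⟨x, hx, hgx⟩ := mem_thickening_iff.1 (hGX p z)
    have hxf := mem_closedBall.1 (filledHull_subset_closedBall (half_pos hε).le hball hx)
    rw [hgG p hz]
    linarith [dist_triangle (G p z) x (f z), hgx.trans_le (min_le_right _ _)]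
  · have hzs := subset_sphere_of_mem_gridEdges he hz
    rw [hgG p (sphere_subset_closedBall hzs), hGE p hzs, hEf p e he hfe hz]

end Improvement

section Square

/-- The boundary of the unit square, along which homotopies of paths are prescribed. -/
def squareBoundary : Set (I × I) := {0, 1} ×ˢ univ ∪ univ ×ˢ {0, 1}

/-- The retraction of the plane onto the square of side `N`, rescaled to the unit square: it carries
the unit grid to the subdivision of the unit square into `N ^ 2` cells. -/
noncomputable def squareClamp (N : ℕ) (z : ℝ × ℝ) : I × I :=
  (projIcc 0 1 zero_le_one (z.1 / N), projIcc 0 1 zero_le_one (z.2 / N))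

lemma continuous_squareClamp (N : ℕ) : Continuous (squareClamp N) :=
  (continuous_projIcc.comp (by fun_prop)).prodMk (continuous_projIcc.comp (by fun_prop))

lemma dist_squareClamp_le (N : ℕ) (z w : ℝ × ℝ) :
    dist (squareClamp N z) (squareClamp N w) ≤ dist z w / N := by
  have hcoord : ∀ x y : ℝ, dist (projIcc 0 1 zero_le_one (x / N) : I)
      (projIcc 0 1 zero_le_one (y / N)) ≤ dist x y / N := fun x y => by
    rw [Subtype.dist_eq, Real.dist_eq, Real.dist_eq]
    refine (abs_projIcc_sub_projIcc (zero_le_one' ℝ)).trans_eq ?_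
    rw [← sub_div, abs_div, Nat.abs_cast]
  exact max_le ((hcoord _ _).trans (by gcongr; exact le_max_left _ _))
    ((hcoord _ _).trans (by gcongr; exact le_max_right _ _))

lemma squareClamp_natCast_mul {N : ℕ} (hN : N ≠ 0) (z : I × I) :
    squareClamp N (N * z.1, N * z.2) = z := by
  have hN' : (N : ℝ) ≠ 0 := Nat.cast_ne_zero.2 hN
  simp only [squareClamp, mul_div_cancel_left₀ _ hN', projIcc_val]

lemma exists_mem_gridEdges_of_mem_squareBoundary {N : ℕ} (hN : N ≠ 0) {z : I × I}
    (hz : z ∈ squareBoundary) : ∃ p, ∃ e ∈ gridEdges p, ((N * z.1, N * z.2) : ℝ × ℝ) ∈ e ∧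
      MapsTo (squareClamp N) e squareBoundary := by
  have hN' : (N : ℝ) ≠ 0 := Nat.cast_ne_zero.2 hN
  have hint : ∀ t : I, t ∈ ({0, 1} : Set I) → ∃ k : ℤ, (N * t : ℝ) = k ∧
      projIcc 0 1 zero_le_one ((k : ℝ) / N) ∈ ({0, 1} : Set I) := by
    rintro _ (rfl | rfl)
    · exact ⟨0, by simp, by simp⟩
    · exact ⟨N, by simp, by simp [hN']⟩
  have hfloor := mem_gridCell_floor (N * z.1, N * z.2)
  rw [gridCell_eq_prod] at hfloor
  rcases hz with hz | hz
  · obtain ⟨k, hzk, hk⟩ := hint z.1 hz.1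
    refine ⟨(k, ⌊(N * z.2 : ℝ)⌋), _, Or.inr rfl, ⟨hzk, hfloor.2⟩, ?_⟩
    rintro ⟨_, y⟩ ⟨rfl, -⟩
    exact Or.inl ⟨hk, mem_univ _⟩
  · obtain ⟨k, hzk, hk⟩ := hint z.2 hz.2
    refine ⟨(⌊(N * z.1 : ℝ)⌋, k), _, Or.inl rfl, ⟨hfloor.1, hzk⟩, ?_⟩
    rintro ⟨x, _⟩ ⟨-, rfl⟩
    exact Or.inr ⟨mem_univ _, hk⟩

lemma exists_nat_forall_gridCell_dist_lt {M : Type*} [PseudoMetricSpace M] (F : C(I × I, M)) {δ : ℝ}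
    (hδ : 0 < δ) : ∃ N ≠ 0, ∀ p, ∀ z ∈ gridCell p, ∀ w ∈ gridCell p,
      dist (F (squareClamp N z)) (F (squareClamp N w)) < δ := by
  obtain ⟨δ', hδ', huc⟩ := Metric.uniformContinuous_iff.1
    (CompactSpace.uniformContinuous_of_continuous F.continuous) δ hδ
  obtain ⟨N, hN⟩ := exists_nat_one_div_lt hδ'
  refine ⟨N + 1, N.succ_ne_zero, fun p z hz w hw => huc ?_⟩
  have hzw : dist z w ≤ 1 := by
    linarith [dist_triangle_right z w (gridCenter p), mem_closedBall.1 hz, mem_closedBall.1 hw]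
  calc dist (squareClamp (N + 1) z) (squareClamp (N + 1) w)
      ≤ dist z w / (N + 1 : ℕ) := dist_squareClamp_le _ _ _
    _ ≤ 1 / (N + 1) := by rw [Nat.cast_succ]; gcongr
    _ < δ' := hN

lemma exists_continuousMap_mem_thickening_dist_le {X : Set ℂ}
    (hulpc : IsUniformlyLocPathConnected X) (hX : filledHull X ⊆ X) {ε : ℝ} (hε : 0 < ε) :
    ∃ δ > 0, ∀ F : C(I × I, ℂ), (∀ z, F z ∈ thickening δ X) → MapsTo F squareBoundary X →
      ∀ η > 0, ∃ G : C(I × I, ℂ), (∀ z, G z ∈ thickening η X) ∧ EqOn G F squareBoundary ∧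
        dist G F ≤ ε := by
  obtain ⟨δ, hδ, himprove⟩ := exists_continuous_mem_thickening_dist_le hulpc hX hε
  refine ⟨δ, hδ, fun F hF hFX η hη => ?_⟩
  obtain ⟨N, hN, hosc⟩ := exists_nat_forall_gridCell_dist_lt F hδ
  obtain ⟨g, hg, hgX, hgF, hgE⟩ := himprove (F ∘ squareClamp N)
    (F.continuous.comp (continuous_squareClamp N)) (fun z => hF _) hosc η hη
  refine ⟨⟨fun z => g (N * z.1, N * z.2), by fun_prop⟩, fun z => hgX _, fun z hz => ?_,
    (ContinuousMap.dist_le hε.le).2 fun z => ?_⟩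
  · obtain ⟨p, e, he, hze, hmaps⟩ := exists_mem_gridEdges_of_mem_squareBoundary hN hz
    calc g (N * z.1, N * z.2) = F (squareClamp N (N * z.1, N * z.2)) :=
          hgE p e he (hFX.comp hmaps) hze
      _ = F z := by rw [squareClamp_natCast_mul hN]
  · simpa only [Function.comp_apply, squareClamp_natCast_mul hN, ContinuousMap.coe_mk] using
      hgF (N * z.1, N * z.2)

end Square

section Contraction

lemma exists_tendsto_of_forall_exists_dist_le {M : Type*} [PseudoMetricSpace M] [CompleteSpace M]
    {A : ℕ → Set M} (hzero : (A 0).Nonempty)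
    (hsucc : ∀ k, ∀ a ∈ A k, ∃ b ∈ A (k + 1), dist b a ≤ (1 / 2) ^ k) :
    ∃ (u : ℕ → M) (l : M), (∀ k, u k ∈ A k) ∧ Tendsto u atTop (𝓝 l) := by
  obtain ⟨a₀, ha₀⟩ := hzero
  choose next hnext hdist using hsucc
  let u : ∀ k, A k := Nat.rec ⟨a₀, ha₀⟩ fun k a => ⟨next k a a.2, hnext k a a.2⟩
  have hu : ∀ k, dist (u k).1 (u (k + 1)).1 ≤ 1 * (1 / 2) ^ k := fun k => by
    rw [one_mul, dist_comm]
    exact hdist k (u k) (u k).2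
  obtain ⟨l, hl⟩ := cauchySeq_tendsto_of_complete
    (cauchySeq_of_le_geometric (1 / 2) 1 (by norm_num) hu)
  exact ⟨fun k => (u k).1, l, fun k => (u k).2, hl⟩

lemma mem_of_tendsto_of_mem_thickening {M : Type*} [PseudoMetricSpace M] {X : Set M}
    (hX : IsClosed X) {u : ℕ → M} {l : M} (hu : Tendsto u atTop (𝓝 l)) {δ : ℕ → ℝ}
    (hδ : Tendsto δ atTop (𝓝 0)) (huX : ∀ k, u k ∈ thickening (δ k) X) : l ∈ X := by
  choose v hvX hv using fun k => mem_thickening_iff.1 (huX k)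
  refine hX.mem_of_tendsto (b := atTop) (f := v) ?_ (.of_forall hvX)
  exact hu.congr_dist (squeeze_zero (fun _ => dist_nonneg) (fun k => (hv k).le) hδ)

variable {X : Set ℂ}

lemma exists_continuousMap_eqOn_squareBoundary (hX : IsCompact X) (hpath : IsPathConnected X)
    (hulpc : IsUniformlyLocPathConnected X) (hhull : filledHull X ⊆ X) (F₀ : C(I × I, ℂ))
    (hF₀ : MapsTo F₀ squareBoundary X) :
    ∃ H : C(I × I, ℂ), (∀ z, H z ∈ X) ∧ EqOn H F₀ squareBoundary := by
  choose δ hδ himprove using fun k : ℕ => exists_continuousMap_mem_thickening_dist_le hulpc hhull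
    (ε := (1 / 2) ^ k) (by positivity)
  let δ' : ℕ → ℝ := fun k => min (δ k) ((1 / 2) ^ k)
  have hδ' : ∀ k, 0 < δ' k := fun k => lt_min (hδ k) (by positivity)
  let A : ℕ → Set C(I × I, ℂ) := fun k =>
    {F | (∀ z, F z ∈ thickening (δ' k) X) ∧ EqOn F F₀ squareBoundary}
  have hzero : (A 0).Nonempty := by
    obtain ⟨Φ, hΦ, hΦX, hΦthick⟩ :=
      exists_continuous_eqOn_mem_thickening_filledHull hX hpath continuousOn_id (hδ' 0)
    rw [image_id] at hΦthick
    exact ⟨⟨Φ ∘ F₀, hΦ.comp F₀.continuous⟩,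
      fun z => thickening_subset_of_subset _ hhull (hΦthick _), fun z hz => hΦX (hF₀ hz)⟩
  have hsucc : ∀ k, ∀ F ∈ A k, ∃ G ∈ A (k + 1), dist G F ≤ (1 / 2) ^ k := by
    rintro k F ⟨hFX, hFF₀⟩
    obtain ⟨G, hGX, hGF, hdist⟩ := himprove k F
      (fun z => thickening_mono (min_le_left _ _) X (hFX z)) (hF₀.congr hFF₀.symm) _ (hδ' (k + 1))
    exact ⟨G, ⟨hGX, hGF.trans hFF₀⟩, hdist⟩
  obtain ⟨u, H, hu, huH⟩ := exists_tendsto_of_forall_exists_dist_le hzero hsucc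
  have hlim : ∀ z, Tendsto (fun k => u k z) atTop (𝓝 (H z)) := fun z =>
    ((continuous_eval_const z).tendsto H).comp huH
  have hδ'_lim : Tendsto δ' atTop (𝓝 0) :=
    squeeze_zero (fun k => (hδ' k).le) (fun k => min_le_right _ _)
      (tendsto_pow_atTop_nhds_zero_of_lt_one (by norm_num) (by norm_num))
  refine ⟨H, fun z => mem_of_tendsto_of_mem_thickening hX.isClosed (hlim z) hδ'_lim
    fun k => (hu k).1 z, fun z hz => tendsto_nhds_unique (hlim z) ?_⟩
  exact tendsto_const_nhds.congr fun k => ((hu k).2 hz).symm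

lemma homotopic_refl_of_filledHull_subset (hX : IsCompact X) (hpath : IsPathConnected X)
    (hulpc : IsUniformlyLocPathConnected X) (hhull : filledHull X ⊆ X) {x : X} (γ : Path x x) :
    γ.Homotopic (.refl x) := by
  let F₀ : C(I × I, ℂ) := ⟨fun z => γ z.2 + (z.1 : ℝ) • (x - γ z.2), by fun_prop⟩
  have hbottom : ∀ t, F₀ (0, t) = γ t := fun t => by simp [F₀]
  have htop : ∀ t, F₀ (1, t) = x := fun t => by simp [F₀]
  have hleft : ∀ s, F₀ (s, 0) = x := fun s => by simp [F₀]
  have hright : ∀ s, F₀ (s, 1) = x := fun s => by simp [F₀]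
  have hF₀ : MapsTo F₀ squareBoundary X := by
    rintro ⟨s, t⟩ (⟨rfl | rfl, -⟩ | ⟨-, rfl | rfl⟩)
    exacts [hbottom t ▸ (γ t).2, htop t ▸ x.2, hleft s ▸ x.2, hright s ▸ x.2]
  obtain ⟨H, hHX, hH⟩ := exists_continuousMap_eqOn_squareBoundary hX hpath hulpc hhull F₀ hF₀
  refine ⟨{ toFun := fun z => ⟨H z, hHX z⟩
            map_zero_left := fun t => Subtype.ext ?_
            map_one_left := fun t => Subtype.ext ?_
            prop' := fun s t ht => Subtype.ext ?_ }⟩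
  · exact (hH (Or.inl ⟨Or.inl rfl, mem_univ t⟩)).trans (hbottom t)
  · exact (hH (Or.inl ⟨Or.inr (mem_singleton _), mem_univ t⟩)).trans (htop t)
  · rcases ht with rfl | rfl
    · exact (hH (Or.inr ⟨mem_univ s, Or.inl rfl⟩)).trans ((hleft s).trans (by simp))
    · exact (hH (Or.inr ⟨mem_univ s, Or.inr (mem_singleton _)⟩)).trans ((hright s).trans (by simp))

end Contraction

section Loops

lemma homotopic_refl_filledHull_range {w : ℂ} (γ : Path w w) {x : filledHull (range γ)}
    (β : Path x x) : β.Homotopic (.refl x) := by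
  have : PathConnectedSpace I := isPathConnected_iff_pathConnectedSpace.1
    ((convex_Icc (0 : ℝ) 1).isPathConnected ⟨0, unitInterval.zero_mem⟩)
  have := locallyPathConnectedSpace_unitInterval
  have hY := isCompact_range γ.continuous
  exact homotopic_refl_of_filledHull_subset (isCompact_filledHull hY)
    (isPathConnected_filledHull hY (isPathConnected_range γ.continuous))
    (isUniformlyLocPathConnected_filledHull hY.isClosed
      (isUniformlyLocPathConnected_range γ.continuous))
    (filledHull_subset_filledHull Subset.rfl) β

lemma homotopic_refl_of_filledHull_range_subset {Z : Type*} [TopologicalSpace Z] {j : Z → ℂ}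
    (hj : IsEmbedding j) {z : Z} (γ : Path z z)
    (hγ : filledHull (range fun t => j (γ t)) ⊆ range j) : γ.Homotopic (.refl z) := by
  let jγ : Path (j z) (j z) := γ.map hj.continuous
  let r : C(filledHull (range jγ), Z) :=
    ⟨fun w => hj.toHomeomorph.symm (inclusion hγ w),
      hj.toHomeomorph.symm.continuous.comp (continuous_inclusion hγ)⟩
  have hr : ∀ a (ha : j a ∈ filledHull (range jγ)), r ⟨j a, ha⟩ = a := fun a _ =>
    hj.toHomeomorph.symm_apply_apply a
  have hmem : ∀ t, jγ t ∈ filledHull (range jγ) := fun t => subset_filledHull (mem_range_self t)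
  have hz : j z ∈ filledHull (range jγ) := subset_filledHull ⟨0, jγ.source⟩
  let β : Path (⟨j z, hz⟩ : filledHull (range jγ)) ⟨j z, hz⟩ :=
    { toFun := fun t => ⟨jγ t, hmem t⟩
      source' := Subtype.ext jγ.source
      target' := Subtype.ext jγ.target }
  have hβ := ((homotopic_refl_filledHull_range jγ β).map r).pathCast (hr z hz).symm (hr z hz).symm
  have hβγ : (β.map r.continuous).cast (hr z hz).symm (hr z hz).symm = γ :=
    Path.ext (funext fun t => hr (γ t) (hmem t))
  have hrefl : ((Path.refl _).map r.continuous).cast (hr z hz).symm (hr z hz).symm = .refl z :=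
    Path.ext (funext fun _ => hr z hz)
  rwa [hβγ, hrefl] at hβ

end Loops

end PlaneTopology

open PlaneTopology in
theorem trivial_pi1_of_iInter_simply_connected_general {E : Type*} [AddCommGroup E] [Module ℝ E]
    [TopologicalSpace E] [IsTopologicalAddGroup E] [ContinuousSMul ℝ E] [T2Space E]
    (hE : Module.finrank ℝ E = 2) {ι : Sort*} (S : ι → Set E) (x : E) (hx : x ∈ ⋂ i, S i)
    (hS : ∀ i, ∀ γ : Path (⟨x, mem_iInter.1 hx i⟩ : S i) ⟨x, mem_iInter.1 hx i⟩,
      γ.Homotopic (.refl _)) (γ : Path (⟨x, hx⟩ : ⋂ i, S i) ⟨x, hx⟩) :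
    γ.Homotopic (.refl _) := by
  have : FiniteDimensional ℝ E := .of_finrank_eq_succ hE
  let e : E ≃L[ℝ] ℂ := .ofFinrankEq (hE.trans Complex.finrank_real_complex.symm)
  refine homotopic_refl_of_filledHull_range_subset
    (e.toHomeomorph.isEmbedding.comp .subtypeVal) γ fun w hw => ?_
  have hwS : e.symm w ∈ ⋂ i, S i := mem_iInter.2 fun i => by
    have hi : Continuous (inclusion (iInter_subset S i)) := continuous_inclusion _
    obtain ⟨y, rfl⟩ := filledHull_range_subset_range (hS i) (j := fun y : S i => e y)
      (by fun_prop) (e.injective.comp Subtype.val_injective) (γ.map hi) hw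
    rw [e.symm_apply_apply]
    exact y.2
  exact ⟨⟨e.symm w, hwS⟩, e.apply_symm_apply w⟩

/-- The intersection of an arbitrary nonempty family of simply connected subsets of the
plane has trivial fundamental group with respect to each of its points: every loop in
`⋂ i, S i` based at a point `x` of the intersection is null-homotopic within `⋂ i, S i`. -/
theorem trivial_pi1_of_iInter_simply_connected
    {ι : Type*} [Nonempty ι] (S : ι → Set (EuclideanSpace ℝ (Fin 2)))
    (hs : ∀ i, SimplyConnectedSpace (S i))
    (x : EuclideanSpace ℝ (Fin 2)) (hx : x ∈ ⋂ i, S i) :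
    ∀ γ : Path (⟨x, hx⟩ : ↥(⋂ i, S i)) (⟨x, hx⟩ : ↥(⋂ i, S i)),
      γ.Homotopic (Path.refl (⟨x, hx⟩ : ↥(⋂ i, S i))) :=
  trivial_pi1_of_iInter_simply_connected_general finrank_euclideanSpace_fin S x hx fun _ _ =>
    SimplyConnectedSpace.paths_homotopic _ _
end
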